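/- arXiv:1602.01561 — 9 statements merged into one kernel-verified Lean document; each statement's English description precedes it below -/
import Mathlib

section
/- Let G₁ and G₂ be finite simple graphs on disjoint nonempty vertex sets such that |V(G₁)| ≥ |E(G₁)| + 1 and |V(G₂)| ≥ |E(G₂)| + 1 (in particular this holds when G₁ and G₂ are trees). Then the disjoint union G₁ ∪ G₂ is not a geometric mean graph. -/
/-! A `k`-geometric mean labeling of a graph with `q` edges injects the vertices into
`{k, …, k + q}`, so such a graph has at most `q + 1` vertices. The disjoint union has at most
`|E(G₁)| + |E(G₂)|` edges (`ncard_edgeSet_disjUnion_le`) but at least `|E(G₁)| + |E(G₂)| + 2`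
vertices, so the bound on the number of vertices already fails. The edge labels play no role. -/

/-- The ceiling of the square root of a natural number. -/
def ceilSqrt (n : ℕ) : ℕ :=
  if Nat.sqrt n * Nat.sqrt n = n then Nat.sqrt n else Nat.sqrt n + 1

/-- `ψ` is a `k`-geometric mean labeling of the graph `G`: an injection of the vertices into
`{k, …, k + q}` (where `q` is the number of edges of `G`) such that each edge `uv` can be
assigned the label `⌊√(ψ u * ψ v)⌋` or `⌈√(ψ u * ψ v)⌉` (the choice may vary from edge to
edge) so that the resulting set of edge labels is exactly `{k, …, k + q - 1}`. -/
def IsKGeometricMeanLabeling {V : Type*} (G : SimpleGraph V) (k : ℕ) (ψ : V → ℕ) : Prop :=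
  Function.Injective ψ ∧
  (∀ v : V, ψ v ∈ Set.Icc k (k + G.edgeSet.ncard)) ∧
  ∃ L : Sym2 V → ℕ,
    (∀ u v : V, G.Adj u v →
      L s(u, v) = Nat.sqrt (ψ u * ψ v) ∨ L s(u, v) = ceilSqrt (ψ u * ψ v)) ∧
    L '' G.edgeSet = Set.Icc k (k + G.edgeSet.ncard - 1)

/-- `G` is a `k`-geometric mean graph: it admits a `k`-geometric mean labeling.
A geometric mean graph is a `1`-geometric mean graph. -/
def IsKGeometricMeanGraph {V : Type*} (G : SimpleGraph V) (k : ℕ) : Prop :=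
  ∃ ψ : V → ℕ, IsKGeometricMeanLabeling G k ψ

/-- The disjoint union `G ∪ H` of two graphs on disjoint vertex sets. -/
def disjUnion {V W : Type*} (G : SimpleGraph V) (H : SimpleGraph W) : SimpleGraph (V ⊕ W) :=
  SimpleGraph.fromRel (fun a b =>
    match a, b with
    | Sum.inl u, Sum.inl v => G.Adj u v
    | Sum.inr u, Sum.inr v => H.Adj u v
    | _, _ => False)

/-- Every edge of the disjoint union comes from an edge of `G` or of `H`; equality holds too, but
only this inequality is needed. -/
lemma ncard_edgeSet_disjUnion_le {V W : Type*} [Finite V] [Finite W]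
    (G : SimpleGraph V) (H : SimpleGraph W) :
    (disjUnion G H).edgeSet.ncard ≤ G.edgeSet.ncard + H.edgeSet.ncard := by
  have hsub : (disjUnion G H).edgeSet ⊆
      Sym2.map Sum.inl '' G.edgeSet ∪ Sym2.map Sum.inr '' H.edgeSet := by
    intro e
    induction e using Sym2.ind with
    | _ a b =>
      intro h
      rw [SimpleGraph.mem_edgeSet, disjUnion, SimpleGraph.fromRel_adj] at h
      rcases a with a | a <;> rcases b with b | b
      · exact Or.inl ⟨s(a, b), h.2.elim id fun h => G.adj_symm h, rfl⟩
      · exact (or_self_iff.mp h.2).elim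
      · exact (or_self_iff.mp h.2).elim
      · exact Or.inr ⟨s(a, b), h.2.elim id fun h => H.adj_symm h, rfl⟩
  calc (disjUnion G H).edgeSet.ncard
      ≤ (Sym2.map Sum.inl '' G.edgeSet ∪ Sym2.map Sum.inr '' H.edgeSet :
          Set (Sym2 (V ⊕ W))).ncard := Set.ncard_le_ncard hsub (Set.toFinite _)
    _ ≤ _ := Set.ncard_union_le _ _
    _ ≤ _ := Nat.add_le_add (Set.ncard_image_le (Set.toFinite _))
        (Set.ncard_image_le (Set.toFinite _))

lemma IsKGeometricMeanGraph.card_le {V : Type*} [Fintype V] {G : SimpleGraph V} {k : ℕ}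
    (h : IsKGeometricMeanGraph G k) : Fintype.card V ≤ G.edgeSet.ncard + 1 := by
  obtain ⟨ψ, hinj, hmem, -⟩ := h
  have := Finset.card_le_card_of_injOn (s := Finset.univ)
    (t := Finset.Icc k (k + G.edgeSet.ncard)) ψ
    (fun v _ => by simpa using hmem v) hinj.injOn
  rw [Finset.card_univ, Nat.card_Icc] at this
  omega

/-- If `G₁` and `G₂` are finite simple graphs on disjoint nonempty vertex sets with
`|V(G₁)| ≥ |E(G₁)| + 1` and `|V(G₂)| ≥ |E(G₂)| + 1`, then their disjoint union is not a
geometric mean graph. -/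
theorem statement1 {V W : Type*} [Fintype V] [Fintype W] [Nonempty V] [Nonempty W]
    (G₁ : SimpleGraph V) (G₂ : SimpleGraph W)
    (h1 : G₁.edgeSet.ncard + 1 ≤ Fintype.card V)
    (h2 : G₂.edgeSet.ncard + 1 ≤ Fintype.card W) :
    ¬ IsKGeometricMeanGraph (disjUnion G₁ G₂) 1 := by
  intro h
  have hc := h.card_le
  have he := ncard_edgeSet_disjUnion_le G₁ G₂
  rw [Fintype.card_sum] at hc
  omega
end

section
/- Let n be a positive integer. If the star S_n is a geometric mean graph, then n ≤ 7. -/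
/-- The star `S n` on `n + 1` vertices: the vertex `0` is the center, joined to the `n` leaves. -/
def starG (n : ℕ) : SimpleGraph (Fin (n + 1)) :=
  SimpleGraph.fromRel (fun u _ => u = 0)

lemma sqrt_le_ceilSqrt (m : ℕ) : Nat.sqrt m ≤ ceilSqrt m := by
  unfold ceilSqrt
  split_ifs <;> omega

lemma lt_of_lt_ceilSqrt {p m : ℕ} (h : p < ceilSqrt m) : p * p < m := by
  unfold ceilSqrt at h
  have hs := Nat.sqrt_le m
  split_ifs at h with hm
  · nlinarith
  · have h₁ : p ≤ Nat.sqrt m := by omega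
    have h₂ : Nat.sqrt m * Nat.sqrt m < m := lt_of_le_of_ne hs hm
    nlinarith

/-- A product at least `2` has rounded-up square root at least `2`, so an edge label `1` on it
must be the rounded-down square root. -/
lemma le_three_of_label_one {m : ℕ} (hm : 2 ≤ m)
    (h : 1 = Nat.sqrt m ∨ 1 = ceilSqrt m) : m ≤ 3 := by
  have hs : 1 = Nat.sqrt m := by
    rcases h with h | h
    · exact h
    · unfold ceilSqrt at h
      have := Nat.sqrt_pos.2 (show 0 < m by omega)
      split_ifs at h with hm'
      · exact h
      · omega
  have := Nat.lt_succ_sqrt m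
  rw [← hs] at this
  omega

/-- Every edge of the star joins the center to a leaf, so every edge label comes from the
product of the center's label with that of a leaf. -/
lemma exists_leaf_of_label {n : ℕ} {ψ : Fin (n + 1) → ℕ} {L : Sym2 (Fin (n + 1)) → ℕ}
    (hL : ∀ u v, (starG n).Adj u v →
      L s(u, v) = Nat.sqrt (ψ u * ψ v) ∨ L s(u, v) = ceilSqrt (ψ u * ψ v))
    {l : ℕ} (hl : l ∈ L '' (starG n).edgeSet) :
    ∃ v, v ≠ 0 ∧ (l = Nat.sqrt (ψ 0 * ψ v) ∨ l = ceilSqrt (ψ 0 * ψ v)) := by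
  obtain ⟨e, he, rfl⟩ := hl
  induction e using Sym2.ind with
  | _ u v =>
    rw [SimpleGraph.mem_edgeSet] at he
    have hadj := hL u v he
    rw [starG, SimpleGraph.fromRel_adj] at he
    obtain ⟨hne, rfl | rfl⟩ := he
    · exact ⟨v, hne.symm, hadj⟩
    · exact ⟨u, hne, by rwa [mul_comm (ψ 0)]⟩

/-- If the star `S n` is a geometric mean graph, then `n ≤ 7`. -/
theorem statement2 (n : ℕ) (hn : 1 ≤ n) (h : IsKGeometricMeanGraph (starG n) 1) :
    n ≤ 7 := by
  obtain ⟨ψ, hinj, hran, L, hL, himg⟩ := h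
  generalize (starG n).edgeSet.ncard = q at hran himg
  have hnq : n ≤ q := by
    have := Finset.card_le_card_of_injOn (s := Finset.univ) (t := Finset.Icc 1 (1 + q)) ψ
      (fun v _ => by simpa using hran v) hinj.injOn
    simp at this
    omega
  have hone : 1 ∈ L '' (starG n).edgeSet := by rw [himg, Set.mem_Icc]; omega
  have htop : q ∈ L '' (starG n).edgeSet := by rw [himg, Set.mem_Icc]; omega
  obtain ⟨v, hv, h1⟩ := exists_leaf_of_label hL hone
  obtain ⟨w, -, hq⟩ := exists_leaf_of_label hL htop
  have h0 := (hran 0).1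
  have hv1 := (hran v).1
  have hw := (hran w).2
  have hne : ψ v ≠ ψ 0 := fun e => hv (hinj e)
  have hprod : 2 ≤ ψ 0 * ψ v := by
    rcases Nat.lt_or_gt_of_ne hne with hlt | hlt <;> nlinarith
  have h3 := le_three_of_label_one hprod h1
  have hc : ψ 0 ≤ 3 := by nlinarith
  have hqle : q ≤ ceilSqrt (ψ 0 * ψ w) := by
    rcases hq with hq | hq
    · exact hq.le.trans (sqrt_le_ceilSqrt _)
    · exact hq.le
  obtain ⟨p, rfl⟩ : ∃ p, q = p + 1 := ⟨q - 1, by omega⟩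
  have hlt := lt_of_lt_ceilSqrt (show p < ceilSqrt (ψ 0 * ψ w) by omega)
  have hle : ψ 0 * ψ w ≤ 3 * (1 + (p + 1)) := Nat.mul_le_mul hc hw
  by_contra! hn8
  nlinarith
end

section
/- Let n ≥ 1 and suppose ψ is a geometric mean labeling of the star S_n, and let c = ψ(center) be the label of the center vertex. Then c ≥ n − 2. -/
lemma sq_lt_of_lt_ceilSqrt {m r : ℕ} (h : r < ceilSqrt m) : r * r < m := by
  have h1 := Nat.sqrt_le m
  unfold ceilSqrt at h
  split_ifs at h with h2
  · nlinarith
  · have h3 : r * r ≤ Nat.sqrt m * Nat.sqrt m := Nat.mul_le_mul (by omega) (by omega)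
    omega

/-- If `ψ` is a geometric mean labeling of the star `S n` (`n ≥ 1`) and `c = ψ 0` is the label
of the center, then `c ≥ n - 2`. -/
theorem statement5 (n : ℕ) (hn : 1 ≤ n) (ψ : Fin (n + 1) → ℕ)
    (hψ : IsKGeometricMeanLabeling (starG n) 1 ψ) :
    ψ 0 ≥ n - 2 := by
  obtain ⟨hinj, hrange, L, hL, himg⟩ := hψ
  generalize (starG n).edgeSet.ncard = q at hrange himg
  have hnq : n ≤ q := by
    have h := Finset.card_le_card_of_injOn (s := Finset.univ) (t := Finset.Icc 1 (1 + q)) ψ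
      (fun v _ => by simpa using hrange v) hinj.injOn
    simp only [Finset.card_univ, Fintype.card_fin, Nat.card_Icc] at h
    omega
  have hq : q ∈ L '' (starG n).edgeSet := by
    rw [himg, Set.mem_Icc]; omega
  -- The top label `q` is realised by an edge at the center.
  obtain ⟨v, hv⟩ : ∃ v, q ≤ ceilSqrt (ψ 0 * ψ v) := by
    obtain ⟨e, he, hLe⟩ := hq
    induction e using Sym2.ind with
    | _ u v =>
      have hle : q ≤ ceilSqrt (ψ u * ψ v) := by
        have := sqrt_le_ceilSqrt (ψ u * ψ v)
        rcases hL u v he with h | h <;> omega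
      have h0 : u = 0 ∨ v = 0 := by
        have := (SimpleGraph.fromRel_adj (fun u _ : Fin (n + 1) => u = 0) u v).1 he
        exact this.2
      rcases h0 with rfl | rfl
      · exact ⟨v, hle⟩
      · exact ⟨u, by rwa [mul_comm]⟩
  have hb : ψ v ≤ 1 + q := (hrange v).2
  by_contra! hc
  obtain ⟨r, rfl⟩ : ∃ r, q = r + 3 := ⟨q - 3, by omega⟩
  have h1 : (r + 2) * (r + 2) < ψ 0 * ψ v := sq_lt_of_lt_ceilSqrt (by omega)
  have h2 : ψ 0 * ψ v ≤ r * (r + 4) := Nat.mul_le_mul (by omega) (by omega)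
  nlinarith
end

section
/- For all positive integers n and k, the path P_n on n vertices is a k-geometric mean graph. In fact, the labeling ψ(u_i) = (k−1) + i for 1 ≤ i ≤ n (where u_1 u_2 … u_n is the path) is a k-geometric mean labeling, with each edge u_i u_{i+1} receiving the label ⌊√(ψ(u_i)ψ(u_{i+1}))⌋. -/
/-- The path `P n` on `n` vertices `u_1, …, u_n`, with edges `u_i u_{i+1}` (`0`-indexed here). -/
def pathG (n : ℕ) : SimpleGraph (Fin n) :=
  SimpleGraph.fromRel (fun u v => v.val = u.val + 1)

/-- The edge labeling assigning `⌊√(ψ u * ψ v)⌋` to each edge `uv`. -/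
def floorLabel {V : Type*} (ψ : V → ℕ) : Sym2 V → ℕ :=
  Sym2.lift ⟨fun u v => Nat.sqrt (ψ u * ψ v), fun u v => by simp [Nat.mul_comm]⟩

theorem sqrt_mul_succ (a : ℕ) : Nat.sqrt (a * (a + 1)) = a := by
  rw [Nat.mul_succ]
  exact Nat.sqrt_add_eq a (by omega)

/-- The edge of the path joining the `i`-th and `(i + 1)`-st vertices (`0`-indexed). -/
def pathEdge (m : ℕ) (i : Fin m) : Sym2 (Fin (m + 1)) :=
  s(i.castSucc, i.succ)

theorem edgeSet_pathG (m : ℕ) : (pathG (m + 1)).edgeSet = Set.range (pathEdge m) := by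
  ext e
  induction e using Sym2.ind with
  | _ u v =>
    simp only [SimpleGraph.mem_edgeSet, pathG, SimpleGraph.fromRel_adj, Set.mem_range, pathEdge,
      Sym2.eq_iff, Fin.ext_iff, Fin.val_castSucc, Fin.val_succ, ne_eq]
    constructor
    · rintro ⟨-, h | h⟩
      · exact ⟨⟨u, by omega⟩, Or.inl ⟨rfl, h.symm⟩⟩
      · exact ⟨⟨v, by omega⟩, Or.inr ⟨rfl, h.symm⟩⟩
    · rintro ⟨i, h | h⟩ <;> omega

theorem floorLabel_pathEdge (m k : ℕ) (i : Fin m) :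
    floorLabel (fun j : Fin (m + 1) => k + j.val) (pathEdge m i) = k + i.val :=
  sqrt_mul_succ (k + i.val)

theorem ncard_edgeSet_pathG (m : ℕ) : (pathG (m + 1)).edgeSet.ncard = m := by
  -- The floor labels for `k = 0` separate the edges.
  have hinj : Function.Injective (pathEdge m) := fun i j h => by
    have h' := congrArg (floorLabel fun j : Fin (m + 1) => 0 + j.val) h
    rw [floorLabel_pathEdge, floorLabel_pathEdge] at h'
    exact Fin.ext (by omega)
  rw [edgeSet_pathG, ← Set.image_univ, Set.ncard_image_of_injective _ hinj, Set.ncard_univ,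
    Nat.card_fin]

theorem floorLabel_image_edgeSet (m k : ℕ) (hk : 1 ≤ k) :
    floorLabel (fun j : Fin (m + 1) => k + j.val) '' (pathG (m + 1)).edgeSet
      = Set.Icc k (k + (pathG (m + 1)).edgeSet.ncard - 1) := by
  rw [ncard_edgeSet_pathG, edgeSet_pathG]
  ext x
  simp only [Set.mem_image, Set.exists_range_iff, floorLabel_pathEdge, Set.mem_Icc]
  constructor
  · rintro ⟨i, rfl⟩
    omega
  · rintro ⟨h₁, h₂⟩
    -- Since `k` is positive, `k + m - 1` does not truncate; for `m = 0` the interval is empty.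
    exact ⟨⟨x - k, by omega⟩, by simp only; omega⟩

/-- For all positive integers `n` and `k`, the path `P n` is a `k`-geometric mean graph;
in fact `ψ u_i = (k - 1) + i` (here `0`-indexed: `ψ i = k + i`) is a `k`-geometric mean
labeling, with each edge `u_i u_{i+1}` receiving the label `⌊√(ψ u_i * ψ u_{i+1})⌋`. -/
theorem statement6 (n k : ℕ) (hn : 1 ≤ n) (hk : 1 ≤ k) :
    IsKGeometricMeanGraph (pathG n) k ∧
    IsKGeometricMeanLabeling (pathG n) k (fun i : Fin n => k + i.val) ∧
    (floorLabel (fun i : Fin n => k + i.val)) '' (pathG n).edgeSet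
      = Set.Icc k (k + (pathG n).edgeSet.ncard - 1) := by
  obtain ⟨m, rfl⟩ : ∃ m, n = m + 1 := ⟨n - 1, by omega⟩
  have himage := floorLabel_image_edgeSet m k hk
  have hlabeling : IsKGeometricMeanLabeling (pathG (m + 1)) k (fun i => k + i.val) := by
    refine ⟨fun i j h => Fin.ext (Nat.add_left_cancel h), fun v => ?_,
      floorLabel (fun i => k + i.val), fun u v _ => Or.inl rfl, himage⟩
    rw [ncard_edgeSet_pathG, Set.mem_Icc]
    dsimp only
    omega
  exact ⟨⟨_, hlabeling⟩, hlabeling, himage⟩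
end

section
/- For all integers n ≥ 3 and k ≥ 1, the cycle C_n on n vertices is a k-geometric mean graph. -/
/-- The cycle `C n` on `n` vertices (intended for `n ≥ 3`): the path `P n` together with the
edge `u_n u_1`. -/
def cycleG (n : ℕ) : SimpleGraph (Fin n) :=
  SimpleGraph.fromRel (fun u v => v.val = u.val + 1 ∨ (u.val = n - 1 ∧ v.val = 0))

/-- The cyclic successor of a vertex of the cycle. -/
def cycNext {n : ℕ} (i : Fin n) : Fin n :=
  ⟨if i.val + 1 = n then 0 else i.val + 1, by have := i.isLt; split <;> omega⟩

/-- The vertex labeling: even offsets from `k` upwards along the cycle, then odd offsets back. -/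
def zigzag (n k : ℕ) (i : Fin n) : ℕ :=
  if 2 * i.val < n then k + 2 * i.val else k + 2 * (n - i.val) - 1

/-- The edge labeling, as a function of the sum of the end labels. The edge joining `k` and
`k + 1` is rounded down; all other edges are rounded up. As adjacent labels `a < b` have
`b - a ≤ 2`, the half-sum rounded up is `a + 1`. -/
def zigzagEdge (n k : ℕ) : Sym2 (Fin n) → ℕ :=
  Sym2.lift ⟨fun u v => if zigzag n k u + zigzag n k v = 2 * k + 1 then k
    else (zigzag n k u + zigzag n k v + 1) / 2, fun u v => by simp only [Nat.add_comm]⟩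

lemma sqrt_near {a d : ℕ} (hd : d ≤ 2) : Nat.sqrt (a * (a + d)) = a := by
  rw [eq_comm, Nat.eq_sqrt]
  constructor <;> nlinarith

lemma ceilSqrt_near {a d : ℕ} (ha : 1 ≤ a) (hd1 : 1 ≤ d) (hd : d ≤ 2) :
    ceilSqrt (a * (a + d)) = a + 1 := by
  unfold ceilSqrt
  rw [sqrt_near hd, if_neg]
  intro h
  nlinarith

lemma cycleG_adj {n : ℕ} (hn : 3 ≤ n) (u v : Fin n) :
    (cycleG n).Adj u v ↔ v = cycNext u ∨ u = cycNext v := by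
  have := u.isLt
  have := v.isLt
  simp only [cycleG, SimpleGraph.fromRel_adj, cycNext, Fin.ext_iff, ne_eq]
  split_ifs <;> omega

lemma cycleG_edgeSet {n : ℕ} (hn : 3 ≤ n) :
    (cycleG n).edgeSet = Set.range fun i : Fin n => s(i, cycNext i) := by
  ext e
  induction e using Sym2.ind with
  | _ u v =>
    rw [SimpleGraph.mem_edgeSet, cycleG_adj hn]
    constructor
    · rintro (rfl | rfl)
      · exact ⟨u, rfl⟩
      · exact ⟨v, Sym2.eq_swap⟩
    · rintro ⟨i, hi⟩
      rcases Sym2.eq_iff.1 hi with ⟨rfl, rfl⟩ | ⟨rfl, rfl⟩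
      · exact Or.inl rfl
      · exact Or.inr rfl

lemma cycleG_ncard {n : ℕ} (hn : 3 ≤ n) : (cycleG n).edgeSet.ncard = n := by
  have hinj : Function.Injective fun i : Fin n => s(i, cycNext i) := by
    intro i j h
    have := i.isLt
    have := j.isLt
    rcases Sym2.eq_iff.1 h with ⟨h, -⟩ | ⟨h1, h2⟩
    · exact h
    · simp only [cycNext, Fin.ext_iff] at h1 h2 ⊢
      split_ifs at h1 h2 <;> omega
  rw [cycleG_edgeSet hn, ← Set.image_univ, Set.ncard_image_of_injective _ hinj, Set.ncard_univ,
    Nat.card_fin]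

/-- The label of the `i`-th edge in terms of its position on the cycle. -/
lemma zigzagEdge_eq {n k : ℕ} (hn : 3 ≤ n) (i : Fin n) :
    zigzagEdge n k s(i, cycNext i) =
      if 2 * i.val + 1 < n then k + 2 * i.val + 1 else k + 2 * (n - i.val) - 2 := by
  have := i.isLt
  simp only [zigzagEdge, Sym2.lift_mk, zigzag, cycNext]
  split_ifs <;> omega

/-- The end labels of an edge are `a` and `a + d` with `d ∈ {1, 2}`, in one of the two orders. -/
lemma zigzag_gap {n k : ℕ} (hn : 3 ≤ n) (hk : 1 ≤ k) (i : Fin n) :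
    ∃ a d, 1 ≤ a ∧ 1 ≤ d ∧ d ≤ 2 ∧
      (zigzag n k i = a ∧ zigzag n k (cycNext i) = a + d ∨
        zigzag n k i = a + d ∧ zigzag n k (cycNext i) = a) := by
  have hi := i.isLt
  have hpos : 1 ≤ zigzag n k i ∧ 1 ≤ zigzag n k (cycNext i) := by
    simp only [zigzag, cycNext]
    split_ifs <;> omega
  have hdist : zigzag n k i ≠ zigzag n k (cycNext i) ∧
      zigzag n k i ≤ zigzag n k (cycNext i) + 2 ∧ zigzag n k (cycNext i) ≤ zigzag n k i + 2 := by
    simp only [zigzag, cycNext]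
    split_ifs <;> omega
  rcases Nat.lt_or_ge (zigzag n k i) (zigzag n k (cycNext i)) with h | h
  · exact ⟨zigzag n k i, zigzag n k (cycNext i) - zigzag n k i, by omega⟩
  · exact ⟨zigzag n k (cycNext i), zigzag n k i - zigzag n k (cycNext i), by omega⟩

lemma zigzagEdge_spec {n k : ℕ} (hn : 3 ≤ n) (hk : 1 ≤ k) (i : Fin n) :
    zigzagEdge n k s(i, cycNext i) = Nat.sqrt (zigzag n k i * zigzag n k (cycNext i)) ∨
      zigzagEdge n k s(i, cycNext i) = ceilSqrt (zigzag n k i * zigzag n k (cycNext i)) := by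
  have hlow : ∀ j : Fin n, k ≤ zigzag n k j := by
    intro j
    have := j.isLt
    unfold zigzag
    split_ifs <;> omega
  have h1 := hlow i
  have h2 := hlow (cycNext i)
  obtain ⟨a, d, ha, hd1, hd2, h⟩ := zigzag_gap hn hk i
  have hprod : zigzag n k i * zigzag n k (cycNext i) = a * (a + d) := by
    rcases h with ⟨h, h'⟩ | ⟨h, h'⟩ <;> rw [h, h']
    exact Nat.mul_comm _ _
  rw [hprod, sqrt_near hd2, ceilSqrt_near ha hd1 hd2]
  simp only [zigzagEdge, Sym2.lift_mk]
  split_ifs <;> omega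

/-- For all integers `n ≥ 3` and `k ≥ 1`, the cycle `C n` is a `k`-geometric mean graph. -/
theorem statement7 (n k : ℕ) (hn : 3 ≤ n) (hk : 1 ≤ k) :
    IsKGeometricMeanGraph (cycleG n) k := by
  refine ⟨zigzag n k, ?_, ?_, zigzagEdge n k, ?_, ?_⟩
  · intro i j h
    have := i.isLt
    have := j.isLt
    simp only [zigzag] at h
    rw [Fin.ext_iff]
    split_ifs at h <;> omega
  · intro i
    have := i.isLt
    rw [cycleG_ncard hn, Set.mem_Icc]
    simp only [zigzag]
    split_ifs <;> omega
  · intro u v huv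
    rcases (cycleG_adj hn u v).1 huv with rfl | rfl
    · exact zigzagEdge_spec hn hk u
    · rw [Sym2.eq_swap, Nat.mul_comm]
      exact zigzagEdge_spec hn hk v
  · rw [cycleG_ncard hn, cycleG_edgeSet hn, ← Set.range_comp]
    ext m
    simp only [Set.mem_range, Function.comp_apply, Set.mem_Icc, zigzagEdge_eq hn]
    constructor
    · rintro ⟨i, rfl⟩
      have := i.isLt
      split_ifs <;> omega
    · rintro ⟨h1, h2⟩
      -- Odd offsets `m - k` occur on the ascending part of the cycle, even ones on the way back.
      rcases Nat.even_or_odd' (m - k) with ⟨c, hc | hc⟩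
      · refine ⟨⟨n - c - 1, by omega⟩, ?_⟩
        dsimp only
        split_ifs <;> omega
      · refine ⟨⟨c, by omega⟩, ?_⟩
        dsimp only
        split_ifs <;> omega
end

section
/- For all integers n ≥ 3 and k ≥ 1, the crown C_n ⊙ K_1 admits a k-geometric mean labeling ψ whose vertex labels all lie in {k, k+1, …, k+2n−1}; that is, the largest allowed label k+q = k+2n is not used. -/
/-- The crown `C n ⊙ K 1`: the cycle `C n` on the `inl` vertices, plus a pendant vertex
`inr i` joined to `inl i` for each `i`. -/
def crownG (n : ℕ) : SimpleGraph (Fin n ⊕ Fin n) :=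
  SimpleGraph.fromRel (fun a b =>
    match a, b with
    | Sum.inl u, Sum.inl v => v.val = u.val + 1 ∨ (u.val = n - 1 ∧ v.val = 0)
    | Sum.inl u, Sum.inr v => u = v
    | _, _ => False)

/-! ### Rounded geometric means -/

/-- `l` is an admissible label for an edge whose end vertices are labeled `a` and `b`. -/
def Admissible (a b l : ℕ) : Prop :=
  l = Nat.sqrt (a * b) ∨ l = ceilSqrt (a * b)

lemma Admissible.symm {a b l : ℕ} (h : Admissible a b l) : Admissible b a l := by
  unfold Admissible at *
  rwa [mul_comm b a]

lemma admissible_floor {a b l : ℕ} (h1 : l * l ≤ a * b) (h2 : a * b < (l + 1) * (l + 1)) :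
    Admissible a b l :=
  Or.inl (Nat.eq_sqrt.2 ⟨h1, h2⟩)

lemma admissible_ceil {a b l : ℕ} (h1 : l * l < a * b) (h2 : a * b ≤ (l + 1) * (l + 1)) :
    Admissible a b (l + 1) := by
  right
  unfold ceilSqrt
  rcases h2.lt_or_eq with h | h
  · have hs : l = Nat.sqrt (a * b) := Nat.eq_sqrt.2 ⟨h1.le, h⟩
    rw [← hs, if_neg h1.ne]
  · rw [h, Nat.sqrt_eq, if_pos rfl]

/-! ### Order of the blocks along the cycle -/

/-- The block of the `i`-th cycle vertex: the values at `i = 0, 1, …, n - 1` are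
`0, 1, 3, 5, …, 4, 2`. -/
def block (n i : ℕ) : ℕ :=
  if i = 0 then 0 else if 2 * i ≤ n then 2 * i - 1 else 2 * (n - i)

/-- The label of the cycle vertex of block `j`. -/
def cycleLabel (n k j : ℕ) : ℕ := if j + 1 = n then k + 2 * j + 1 else k + 2 * j

/-- The label of the pendant vertex of block `j`. -/
def pendantLabel (n k j : ℕ) : ℕ := if j + 1 = n then k + 2 * j else k + 2 * j + 1

/-- The label of the cycle edge between the blocks `x` and `y`. The conditions `x + y = 1` and
`x + y + 3 = 2 * n` single out the block pairs `{0, 1}` and `{n - 2, n - 1}`. -/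
def cycleEdgeLabel (n k x y : ℕ) : ℕ :=
  if x + y = 1 then k else if x + y + 3 = 2 * n then k + (x + y) + 1 else k + (x + y)

/-- The successor of `i` on the cycle with vertices `0, …, n - 1`. -/
def next (n i : ℕ) : ℕ := if i + 1 < n then i + 1 else 0

lemma next_lt {n i : ℕ} (hn : 3 ≤ n) : next n i < n := by
  unfold next; split_ifs <;> omega

lemma block_lt {n i : ℕ} (hi : i < n) : block n i < n := by
  unfold block; split_ifs <;> omega

lemma block_inj {n i j : ℕ} (hi : i < n) (hj : j < n) (h : block n i = block n j) : i = j := by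
  unfold block at h; split_ifs at h <;> omega

/-- Two consecutive cycle vertices lie, up to order, in blocks `0, 1`, in blocks `j, j + 2`, or in
the last two blocks. -/
lemma block_next {n i : ℕ} (hn : 3 ≤ n) (hi : i < n) :
    ∃ x y, ((x = 0 ∧ y = 1) ∨ (y = x + 2 ∧ y < n) ∨ (x + 2 = n ∧ y + 1 = n)) ∧
      ((block n i = x ∧ block n (next n i) = y) ∨ (block n i = y ∧ block n (next n i) = x)) := by
  rcases lt_or_ge (block n i) (block n (next n i)) with h | h
  · refine ⟨_, _, ?_, Or.inl ⟨rfl, rfl⟩⟩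
    unfold block next at *
    split_ifs at * <;> omega
  · refine ⟨_, _, ?_, Or.inr ⟨rfl, rfl⟩⟩
    unfold block next at *
    split_ifs at * <;> omega

/-! ### Admissibility of the edge labels -/

lemma cycleEdge_admissible_aux {n k x y : ℕ} (hn : 3 ≤ n) (hk : 1 ≤ k)
    (h : (x = 0 ∧ y = 1) ∨ (y = x + 2 ∧ y < n) ∨ (x + 2 = n ∧ y + 1 = n)) :
    Admissible (cycleLabel n k x) (cycleLabel n k y) (cycleEdgeLabel n k x y) := by
  rcases h with ⟨rfl, rfl⟩ | ⟨rfl, hy⟩ | ⟨hx, hy⟩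
  · have h1 : cycleLabel n k 0 = k := by unfold cycleLabel; split_ifs <;> omega
    have h2 : cycleLabel n k 1 = k + 2 := by unfold cycleLabel; split_ifs <;> omega
    have h3 : cycleEdgeLabel n k 0 1 = k := by simp [cycleEdgeLabel]
    rw [h1, h2, h3]
    exact admissible_floor (by nlinarith) (by nlinarith)
  · have h1 : cycleLabel n k x = k + 2 * x := by unfold cycleLabel; split_ifs <;> omega
    have h3 : cycleEdgeLabel n k x (x + 2) = (k + 2 * x) + 2 := by
      unfold cycleEdgeLabel; split_ifs <;> omega
    rw [h1, h3]
    have ha : 1 ≤ k + 2 * x := by omega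
    by_cases hl : x + 3 = n
    · have h2 : cycleLabel n k (x + 2) = (k + 2 * x) + 5 := by
        unfold cycleLabel; split_ifs <;> omega
      rw [h2]
      generalize k + 2 * x = a at *
      -- For gap `5`, the value `a + 2` is the floor when `4 ≤ a` and the ceiling when `a ≤ 3`.
      rcases le_or_gt 4 a with h4 | h4
      · exact admissible_floor (by nlinarith) (by nlinarith)
      · exact admissible_ceil (by nlinarith) (by nlinarith)
    · have h2 : cycleLabel n k (x + 2) = (k + 2 * x) + 4 := by
        unfold cycleLabel; split_ifs <;> omega
      rw [h2]
      generalize k + 2 * x = a at *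
      exact admissible_ceil (by nlinarith) (by nlinarith)
  · have h1 : cycleLabel n k x = k + 2 * x := by unfold cycleLabel; split_ifs <;> omega
    have h2 : cycleLabel n k y = (k + 2 * x) + 3 := by unfold cycleLabel; split_ifs <;> omega
    have h3 : cycleEdgeLabel n k x y = (k + 2 * x) + 1 + 1 := by
      unfold cycleEdgeLabel; split_ifs <;> omega
    rw [h1, h2, h3]
    have ha : 3 ≤ k + 2 * x := by omega
    generalize k + 2 * x = a at *
    exact admissible_ceil (by nlinarith) (by nlinarith)

lemma cycleEdgeLabel_comm (n k x y : ℕ) : cycleEdgeLabel n k x y = cycleEdgeLabel n k y x := by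
  unfold cycleEdgeLabel; rw [add_comm x y]

lemma cycleEdge_admissible {n k i : ℕ} (hn : 3 ≤ n) (hk : 1 ≤ k) (hi : i < n) :
    Admissible (cycleLabel n k (block n i)) (cycleLabel n k (block n (next n i)))
      (cycleEdgeLabel n k (block n i) (block n (next n i))) := by
  obtain ⟨x, y, h, ⟨h1, h2⟩ | ⟨h1, h2⟩⟩ := block_next hn hi <;> rw [h1, h2]
  · exact cycleEdge_admissible_aux hn hk h
  · rw [cycleEdgeLabel_comm]
    exact (cycleEdge_admissible_aux hn hk h).symm

lemma pendantEdge_admissible {n k j : ℕ} (hk : 1 ≤ k) :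
    Admissible (cycleLabel n k j) (pendantLabel n k j) (k + 2 * j + 1) := by
  have ha : 1 ≤ k + 2 * j := by omega
  unfold cycleLabel pendantLabel
  generalize k + 2 * j = a at *
  split_ifs
  · exact admissible_ceil (by nlinarith) (by nlinarith)
  · exact admissible_ceil (by nlinarith) (by nlinarith)

/-! ### The vertex labeling -/

/-- The vertex labeling of the crown. -/
def vertexLabel (n k : ℕ) : Fin n ⊕ Fin n → ℕ
  | Sum.inl i => cycleLabel n k (block n i)
  | Sum.inr i => pendantLabel n k (block n i)

lemma vertexLabel_mem (n k : ℕ) (v : Fin n ⊕ Fin n) :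
    vertexLabel n k v ∈ Set.Icc k (k + 2 * n - 1) := by
  rcases v with i | i <;> have := block_lt i.2 <;>
    simp only [vertexLabel, cycleLabel, pendantLabel, Set.mem_Icc] <;> split_ifs <;> omega

lemma vertexLabel_injective (n k : ℕ) : Function.Injective (vertexLabel n k) := by
  rintro (i | i) (j | j) h <;>
    simp only [vertexLabel, cycleLabel, pendantLabel] at h
  · rw [Fin.ext (block_inj i.2 j.2 (by split_ifs at h <;> omega))]
  · split_ifs at h <;> omega
  · split_ifs at h <;> omega
  · rw [Fin.ext (block_inj i.2 j.2 (by split_ifs at h <;> omega))]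

/-! ### Edges of the crown -/

/-- Enumeration of the edges of the crown: `inl i` is sent to the cycle edge from the `i`-th cycle
vertex to the next one, and `inr i` to the `i`-th pendant edge. -/
def crownEdge {n : ℕ} (hn : 3 ≤ n) : Fin n ⊕ Fin n → Sym2 (Fin n ⊕ Fin n)
  | Sum.inl i => s(Sum.inl i, Sum.inl ⟨next n i, next_lt hn⟩)
  | Sum.inr i => s(Sum.inl i, Sum.inr i)

lemma edgeSet_crownG {n : ℕ} (hn : 3 ≤ n) :
    (crownG n).edgeSet = Set.range (crownEdge hn) := by
  ext e
  induction e using Sym2.ind with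
  | _ x y =>
    rw [SimpleGraph.mem_edgeSet, crownG, SimpleGraph.fromRel_adj]
    constructor
    · -- a generator of the relation is an enumerated edge
      have key : ∀ a b : Fin n, (b.val = a.val + 1 ∨ (a.val = n - 1 ∧ b.val = 0)) →
          (⟨next n a, next_lt hn⟩ : Fin n) = b := by
        intro a b h
        apply Fin.ext
        have := a.2
        have := b.2
        simp only [next]
        split_ifs <;> omega
      rcases x with a | a <;> rcases y with b | b <;> rintro ⟨hne, h | h⟩
      · exact ⟨Sum.inl a, by simp only [crownEdge, key a b h]⟩
      · exact ⟨Sum.inl b, by simp only [crownEdge, key b a h]; exact Sym2.eq_swap⟩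
      · exact ⟨Sum.inr a, by rw [crownEdge, show a = b from h]⟩
      · exact h.elim
      · exact h.elim
      · exact ⟨Sum.inr b, by rw [crownEdge, show b = a from h]; exact Sym2.eq_swap⟩
      · exact h.elim
      · exact h.elim
    · rintro ⟨i | i, h⟩
      · have hi := i.2
        have hrel : next n i = i.val + 1 ∨ (i.val = n - 1 ∧ next n i = 0) := by
          unfold next; split_ifs <;> omega
        have hne : i ≠ ⟨next n i, next_lt hn⟩ := by
          intro h'
          have := congrArg Fin.val h'
          simp only at this
          omega
        rcases Sym2.eq_iff.1 h with ⟨rfl, rfl⟩ | ⟨rfl, rfl⟩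
        · exact ⟨fun h' => hne (Sum.inl_injective h'), Or.inl hrel⟩
        · exact ⟨fun h' => hne (Sum.inl_injective h').symm, Or.inr hrel⟩
      · rcases Sym2.eq_iff.1 h with ⟨rfl, rfl⟩ | ⟨rfl, rfl⟩
        · exact ⟨by simp, Or.inl rfl⟩
        · exact ⟨by simp, Or.inr rfl⟩

/-! ### The edge labeling -/

/-- The edge labeling, defined on all unordered pairs; two pendant vertices are never adjacent and
get the junk value `0`. -/
def edgeLabel (n k : ℕ) : Sym2 (Fin n ⊕ Fin n) → ℕ :=
  Sym2.lift ⟨fun x y => match x, y with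
    | Sum.inl a, Sum.inl b => cycleEdgeLabel n k (block n a) (block n b)
    | Sum.inl a, Sum.inr _ => k + 2 * block n a + 1
    | Sum.inr _, Sum.inl b => k + 2 * block n b + 1
    | Sum.inr _, Sum.inr _ => 0, by
    rintro (a | a) (b | b)
    · exact cycleEdgeLabel_comm _ _ _ _
    · rfl
    · rfl
    · rfl⟩

lemma edgeLabel_inl {n : ℕ} (k : ℕ) (hn : 3 ≤ n) (i : Fin n) :
    edgeLabel n k (crownEdge hn (Sum.inl i)) =
      cycleEdgeLabel n k (block n i) (block n (next n i)) := rfl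

lemma edgeLabel_inr {n : ℕ} (k : ℕ) (hn : 3 ≤ n) (i : Fin n) :
    edgeLabel n k (crownEdge hn (Sum.inr i)) = k + 2 * block n i + 1 := rfl

/-- Cycle edges get the labels of even offset. -/
lemma cycleEdgeLabel_even {n i : ℕ} (k : ℕ) (hn : 3 ≤ n) (hi : i < n) :
    ∃ m < n, cycleEdgeLabel n k (block n i) (block n (next n i)) = k + 2 * m := by
  obtain ⟨x, y, h, h'⟩ := block_next hn hi
  have hxy : block n i + block n (next n i) = x + y := by omega
  unfold cycleEdgeLabel
  rw [hxy]
  split_ifs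
  · exact ⟨0, by omega, rfl⟩
  · exact ⟨(x + y + 1) / 2, by omega, by omega⟩
  · exact ⟨(x + y) / 2, by omega, by omega⟩

lemma cycleEdgeLabel_inj {n k i j : ℕ} (hn : 3 ≤ n) (hi : i < n) (hj : j < n)
    (h : cycleEdgeLabel n k (block n i) (block n (next n i)) =
      cycleEdgeLabel n k (block n j) (block n (next n j))) : i = j := by
  -- closed form of the sum of the two blocks joined by the `i`-th cycle edge
  have key : ∀ i < n, (i = 0 ∧ block n i + block n (next n i) = 1) ∨
      (1 ≤ i ∧ 2 * i + 2 ≤ n ∧ block n i + block n (next n i) = 4 * i) ∨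
      (2 * i ≤ n ∧ n < 2 * i + 2 ∧ block n i + block n (next n i) + 3 = 2 * n) ∨
      (n < 2 * i ∧ block n i + block n (next n i) + 4 * i + 2 = 4 * n) := by
    intro i hi
    unfold block next
    split_ifs <;> first | contradiction | omega
  have h1 := key i hi
  have h2 := key j hj
  unfold cycleEdgeLabel at h
  generalize block n i + block n (next n i) = s at *
  generalize block n j + block n (next n j) = t at *
  split_ifs at h <;> omega

lemma edgeLabel_injective {n : ℕ} (k : ℕ) (hn : 3 ≤ n) :
    Function.Injective (fun i => edgeLabel n k (crownEdge hn i)) := by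
  rintro (i | i) (j | j) h <;> simp only [edgeLabel_inl, edgeLabel_inr] at h
  · rw [Fin.ext (cycleEdgeLabel_inj hn i.2 j.2 h)]
  · obtain ⟨m, -, hm⟩ := cycleEdgeLabel_even k hn i.2
    omega
  · obtain ⟨m, -, hm⟩ := cycleEdgeLabel_even k hn j.2
    omega
  · rw [Fin.ext (block_inj i.2 j.2 (by omega))]

lemma edgeLabel_mem {n : ℕ} (k : ℕ) (hn : 3 ≤ n) (i : Fin n ⊕ Fin n) :
    edgeLabel n k (crownEdge hn i) ∈ Set.Icc k (k + 2 * n - 1) := by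
  rw [Set.mem_Icc]
  rcases i with i | i
  · obtain ⟨m, hm, h⟩ := cycleEdgeLabel_even k hn i.2
    rw [edgeLabel_inl, h]
    omega
  · have := block_lt i.2
    rw [edgeLabel_inr]
    omega

lemma edgeLabel_admissible {n k : ℕ} (hn : 3 ≤ n) (hk : 1 ≤ k) (u v : Fin n ⊕ Fin n)
    (h : (crownG n).Adj u v) :
    Admissible (vertexLabel n k u) (vertexLabel n k v) (edgeLabel n k s(u, v)) := by
  rw [← SimpleGraph.mem_edgeSet, edgeSet_crownG hn] at h
  obtain ⟨i | i, h⟩ := h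
  · have hc := cycleEdge_admissible hn hk i.2
    rw [← h, edgeLabel_inl]
    rcases Sym2.eq_iff.1 h with ⟨rfl, rfl⟩ | ⟨rfl, rfl⟩
    · exact hc
    · exact hc.symm
  · have hp := pendantEdge_admissible (n := n) (j := block n i) hk
    rw [← h, edgeLabel_inr]
    rcases Sym2.eq_iff.1 h with ⟨rfl, rfl⟩ | ⟨rfl, rfl⟩
    · exact hp
    · exact hp.symm

lemma ncard_range_of_injective {n : ℕ} {α : Type*} {f : Fin n ⊕ Fin n → α}
    (hf : Function.Injective f) : (Set.range f).ncard = 2 * n := by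
  rw [← Set.image_univ, Set.ncard_image_of_injective _ hf, Set.ncard_univ, Nat.card_sum,
    Nat.card_fin, two_mul]

/-- For all integers `n ≥ 3` and `k ≥ 1`, the crown `C n ⊙ K 1` admits a `k`-geometric mean
labeling all of whose vertex labels lie in `{k, …, k + 2n - 1}`; i.e. the largest allowed
label `k + q = k + 2n` is not used. -/
theorem statement11 (n k : ℕ) (hn : 3 ≤ n) (hk : 1 ≤ k) :
    ∃ ψ : Fin n ⊕ Fin n → ℕ, IsKGeometricMeanLabeling (crownG n) k ψ ∧
      ∀ v : Fin n ⊕ Fin n, ψ v ∈ Set.Icc k (k + 2 * n - 1) := by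
  have hinj := edgeLabel_injective k hn
  have hcard : (crownG n).edgeSet.ncard = 2 * n := by
    rw [edgeSet_crownG hn]
    exact ncard_range_of_injective (Function.Injective.of_comp (f := edgeLabel n k) hinj)
  refine ⟨vertexLabel n k, ⟨vertexLabel_injective n k, fun v => ?_, edgeLabel n k,
    edgeLabel_admissible hn hk, ?_⟩, vertexLabel_mem n k⟩
  · have h := vertexLabel_mem n k v
    rw [hcard]
    exact ⟨h.1, h.2.trans (Nat.sub_le _ _)⟩
  · rw [hcard, edgeSet_crownG hn, ← Set.range_comp]
    refine Set.eq_of_subset_of_ncard_le ?_ ?_ (Set.finite_Icc _ _)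
    · rintro _ ⟨i, rfl⟩
      exact edgeLabel_mem k hn i
    · change _ ≤ (Set.range fun i => edgeLabel n k (crownEdge hn i)).ncard
      rw [ncard_range_of_injective hinj, ← Finset.coe_Icc, Set.ncard_coe_finset, Nat.card_Icc]
      omega
end

section
/- For all positive integers n ≥ 2 and k ≥ 1, the triangular snake T_n is a k-geometric mean graph. -/
/-- The triangular snake `T n`: the path on the `inl` vertices `u_1, …, u_n`, and for each
`1 ≤ i ≤ n - 1` a new vertex `inr i` joined to `u_i` and `u_{i+1}`. -/
def triSnakeG (n : ℕ) : SimpleGraph (Fin n ⊕ Fin (n - 1)) :=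
  SimpleGraph.fromRel (fun a b =>
    match a, b with
    | Sum.inl u, Sum.inl v => v.val = u.val + 1
    | Sum.inr w, Sum.inl u => u.val = w.val ∨ u.val = w.val + 1
    | _, _ => False)


namespace TriSnake

lemma sqrt_first (m : ℕ) : Nat.sqrt (m * (m + 1)) = m := by
  symm; rw [Nat.eq_sqrt]; constructor <;> nlinarith

lemma sqrt_second (m : ℕ) (hm : 1 ≤ m) : Nat.sqrt (m * (m + 3)) = m + 1 := by
  symm; rw [Nat.eq_sqrt]; constructor <;> nlinarith

lemma ceilSqrt_third (m : ℕ) : ceilSqrt ((m + 1) * (m + 3)) = m + 2 := by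
  have h : Nat.sqrt ((m + 1) * (m + 3)) = m + 1 := by
    symm; rw [Nat.eq_sqrt]; constructor <;> nlinarith
  have h' : (m + 1) * (m + 1) ≠ (m + 1) * (m + 3) := by
    intro h; nlinarith
  rw [ceilSqrt, h, if_neg h']

/-- The vertex labeling: `k + 3 i` on the path vertex `i` and `k + 3 i + 1` on the apex of the
`i`-th triangle, with indices starting at `0`. -/
def vertexLabel (n k : ℕ) : Fin n ⊕ Fin (n - 1) → ℕ
  | Sum.inl u => k + 3 * u.val
  | Sum.inr w => k + 3 * w.val + 1

/-- The edge label as a function of ordered pairs of vertices. The values on non-edges are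
irrelevant, but are chosen so that the function is symmetric. -/
def pairLabel (n k : ℕ) : Fin n ⊕ Fin (n - 1) → Fin n ⊕ Fin (n - 1) → ℕ
  | Sum.inl u, Sum.inl v => k + 3 * min u.val v.val + 1
  | Sum.inl u, Sum.inr w => if u.val = w.val then k + 3 * w.val else k + 3 * w.val + 2
  | Sum.inr w, Sum.inl u => if u.val = w.val then k + 3 * w.val else k + 3 * w.val + 2
  | Sum.inr _, Sum.inr _ => 0

lemma pairLabel_comm (n k : ℕ) (a b : Fin n ⊕ Fin (n - 1)) :
    pairLabel n k a b = pairLabel n k b a := by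
  rcases a with u | w <;> rcases b with v | x <;> simp [pairLabel, min_comm]

/-- The edge labeling: the three edges of the `i`-th triangle get `k + 3 i`, `k + 3 i + 1` and
`k + 3 i + 2`. -/
def edgeLabel (n k : ℕ) : Sym2 (Fin n ⊕ Fin (n - 1)) → ℕ :=
  Sym2.lift ⟨pairLabel n k, pairLabel_comm n k⟩

/-- The left end of the base of the `w`-th triangle. -/
def left {n : ℕ} (w : Fin (n - 1)) : Fin n := ⟨w.val, by omega⟩

/-- The right end of the base of the `w`-th triangle. -/
def right {n : ℕ} (w : Fin (n - 1)) : Fin n := ⟨w.val + 1, by omega⟩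

/-- The edges of the triangular snake are exactly the sides of its triangles. -/
lemma mem_edgeSet_iff (n : ℕ) (e : Sym2 (Fin n ⊕ Fin (n - 1))) :
    e ∈ (triSnakeG n).edgeSet ↔ ∃ w : Fin (n - 1),
      e = s(Sum.inl (left w), Sum.inr w) ∨ e = s(Sum.inl (left w), Sum.inl (right w)) ∨
        e = s(Sum.inr w, Sum.inl (right w)) := by
  constructor
  · induction e using Sym2.ind with
    | _ a b =>
      rw [SimpleGraph.mem_edgeSet, triSnakeG, SimpleGraph.fromRel_adj]
      rintro ⟨-, h⟩
      rcases a with u | w <;> rcases b with v | x <;> simp only [or_false, false_or] at h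
      · rcases h with h | h
        · refine ⟨⟨u.val, by omega⟩, ?_⟩
          simp [left, right, Fin.ext_iff, h]
        · refine ⟨⟨v.val, by omega⟩, ?_⟩
          simp [left, right, Fin.ext_iff, h]
      · refine ⟨x, ?_⟩
        simpa [left, right, Fin.ext_iff] using h
      · refine ⟨w, ?_⟩
        simpa [left, right, Fin.ext_iff] using h
  · rintro ⟨w, rfl | rfl | rfl⟩ <;>
      simp [triSnakeG, SimpleGraph.fromRel_adj, left, right]

section Values

variable {n : ℕ} (k : ℕ) (w : Fin (n - 1))

lemma edgeLabel_first : edgeLabel n k s(Sum.inl (left w), Sum.inr w) = k + 3 * w.val := by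
  simp [edgeLabel, pairLabel, left]

lemma edgeLabel_second :
    edgeLabel n k s(Sum.inl (left w), Sum.inl (right w)) = k + 3 * w.val + 1 := by
  simp [edgeLabel, pairLabel, left, right]

lemma edgeLabel_third :
    edgeLabel n k s(Sum.inr w, Sum.inl (right w)) = k + 3 * w.val + 2 := by
  simp [edgeLabel, pairLabel, right]

end Values

lemma edgeLabel_injOn (n k : ℕ) : Set.InjOn (edgeLabel n k) (triSnakeG n).edgeSet := by
  intro e he f hf h
  rw [mem_edgeSet_iff] at he hf
  obtain ⟨w, he⟩ := he
  obtain ⟨x, hf⟩ := hf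
  -- The quotient of `label - k` by `3` recovers the triangle, the remainder recovers the side.
  have hwx : w = x := by
    rw [Fin.ext_iff]
    rcases he with rfl | rfl | rfl <;> rcases hf with rfl | rfl | rfl <;>
      simp only [edgeLabel_first, edgeLabel_second, edgeLabel_third] at h <;> omega
  subst hwx
  rcases he with rfl | rfl | rfl <;> rcases hf with rfl | rfl | rfl <;>
    simp only [edgeLabel_first, edgeLabel_second, edgeLabel_third] at h <;> first | rfl | omega

lemma edgeLabel_image (n k : ℕ) (hn : 2 ≤ n) :
    edgeLabel n k '' (triSnakeG n).edgeSet = Set.Icc k (k + 3 * (n - 1) - 1) := by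
  ext m
  simp only [Set.mem_image, Set.mem_Icc, mem_edgeSet_iff]
  constructor
  · rintro ⟨e, ⟨w, rfl | rfl | rfl⟩, rfl⟩ <;>
      simp only [edgeLabel_first, edgeLabel_second, edgeLabel_third] <;> omega
  · rintro ⟨h₁, h₂⟩
    have hw : (m - k) / 3 < n - 1 := by omega
    obtain h | h | h : (m - k) % 3 = 0 ∨ (m - k) % 3 = 1 ∨ (m - k) % 3 = 2 := by omega
    · refine ⟨_, ⟨⟨(m - k) / 3, hw⟩, Or.inl rfl⟩, ?_⟩
      rw [edgeLabel_first]
      simp only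
      omega
    · refine ⟨_, ⟨⟨(m - k) / 3, hw⟩, Or.inr (Or.inl rfl)⟩, ?_⟩
      rw [edgeLabel_second]
      simp only
      omega
    · refine ⟨_, ⟨⟨(m - k) / 3, hw⟩, Or.inr (Or.inr rfl)⟩, ?_⟩
      rw [edgeLabel_third]
      simp only
      omega

/-- The edge count, read off from the injective labeling of the edges by an interval. -/
lemma ncard_edgeSet (n : ℕ) (hn : 2 ≤ n) : (triSnakeG n).edgeSet.ncard = 3 * (n - 1) := by
  rw [← (edgeLabel_injOn n 0).ncard_image, edgeLabel_image n 0 hn,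
    Set.ncard_eq_toFinset_card', Set.toFinset_Icc, Nat.card_Icc]
  omega

/-- Each edge label is the floor or the ceiling of the geometric mean of the end labels. -/
lemma edgeLabel_eq_or (n k : ℕ) (hk : 1 ≤ k) (u v : Fin n ⊕ Fin (n - 1))
    (h : (triSnakeG n).Adj u v) :
    edgeLabel n k s(u, v) = Nat.sqrt (vertexLabel n k u * vertexLabel n k v) ∨
      edgeLabel n k s(u, v) = ceilSqrt (vertexLabel n k u * vertexLabel n k v) := by
  rw [← SimpleGraph.mem_edgeSet, mem_edgeSet_iff] at h
  obtain ⟨w, h⟩ := h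
  have h₁ := sqrt_first (k + 3 * w.val)
  have h₂ := sqrt_second (k + 3 * w.val) (by omega)
  have h₃ := ceilSqrt_third (k + 3 * w.val)
  have hl : vertexLabel n k (Sum.inl (left w)) = k + 3 * w.val := rfl
  have hr : vertexLabel n k (Sum.inl (right w)) = k + 3 * w.val + 3 := rfl
  have ha : vertexLabel n k (Sum.inr w) = k + 3 * w.val + 1 := rfl
  rcases h with h | h | h <;> rw [h] <;> rw [Sym2.eq_iff] at h
  · left
    rw [edgeLabel_first]
    rcases h with ⟨rfl, rfl⟩ | ⟨rfl, rfl⟩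
    · rw [hl, ha, h₁]
    · rw [mul_comm (vertexLabel n k _), hl, ha, h₁]
  · left
    rw [edgeLabel_second]
    rcases h with ⟨rfl, rfl⟩ | ⟨rfl, rfl⟩
    · rw [hl, hr, h₂]
    · rw [mul_comm (vertexLabel n k _), hl, hr, h₂]
  · right
    rw [edgeLabel_third]
    rcases h with ⟨rfl, rfl⟩ | ⟨rfl, rfl⟩
    · rw [ha, hr, h₃]
    · rw [mul_comm (vertexLabel n k _), ha, hr, h₃]

lemma vertexLabel_injective (n k : ℕ) : Function.Injective (vertexLabel n k) := by
  rintro (u | w) (v | x) h <;> simp only [vertexLabel] at h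
  · congr 1; ext; omega
  · omega
  · omega
  · congr 1; ext; omega

end TriSnake

/-- For all integers `n ≥ 2` and `k ≥ 1`, the triangular snake `T n` is a `k`-geometric mean
graph. -/
theorem statement13 (n k : ℕ) (hn : 2 ≤ n) (hk : 1 ≤ k) :
    IsKGeometricMeanGraph (triSnakeG n) k := by
  refine ⟨TriSnake.vertexLabel n k, TriSnake.vertexLabel_injective n k, ?_,
    TriSnake.edgeLabel n k, TriSnake.edgeLabel_eq_or n k hk, ?_⟩
  · intro v
    rw [TriSnake.ncard_edgeSet n hn, Set.mem_Icc]
    rcases v with u | w <;> simp only [TriSnake.vertexLabel] <;> omega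
  · rw [TriSnake.ncard_edgeSet n hn, TriSnake.edgeLabel_image n k hn]
end

section
/- For all positive integers n ≥ 2 and k ≥ 1, the quadrilateral snake Q_n is a k-geometric mean graph. -/
/-- The quadrilateral snake `Q n`: the path on the `inl` vertices `u_1, …, u_n`, and for each
`1 ≤ i ≤ n - 1` new vertices `v_i = inr (i, false)` and `w_i = inr (i, true)` together with
the edges `u_i v_i`, `v_i w_i` and `w_i u_{i+1}`. -/
def quadSnakeG (n : ℕ) : SimpleGraph (Fin n ⊕ (Fin (n - 1) × Bool)) :=
  SimpleGraph.fromRel (fun a b =>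
    match a, b with
    | Sum.inl u, Sum.inl v => v.val = u.val + 1
    | Sum.inl u, Sum.inr (i, b) => (b = false ∧ u.val = i.val) ∨ (b = true ∧ u.val = i.val + 1)
    | Sum.inr (i, b), Sum.inr (j, c) => i = j ∧ b = false ∧ c = true
    | _, _ => False)

/-- The vertex labeling, with the vertices indexed from `0`: `u_i ↦ k + 4 i`, `v_i ↦ k + 4 i + 1`,
`w_i ↦ k + 4 i + 3`. -/
def snakeVertex (n k : ℕ) : Fin n ⊕ (Fin (n - 1) × Bool) → ℕ
  | Sum.inl u => k + 4 * u.val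
  | Sum.inr (i, false) => k + 4 * i.val + 1
  | Sum.inr (i, true) => k + 4 * i.val + 3

/-- The edge labeling: the geometric mean is rounded up when both endpoints lie on the path
`u_1, …, u_n`, and down otherwise. -/
def snakeLabel (n k : ℕ) : Sym2 (Fin n ⊕ (Fin (n - 1) × Bool)) → ℕ :=
  Sym2.lift ⟨fun a b => if a.isLeft && b.isLeft then ceilSqrt (snakeVertex n k a * snakeVertex n k b)
    else Nat.sqrt (snakeVertex n k a * snakeVertex n k b), fun a b => by
      simp only [Bool.and_comm, Nat.mul_comm]⟩

/-- The four edges of the `i`-th block, in the order of their labels: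
`u_i v_i`, `v_i w_i`, `u_i u_{i+1}`, `w_i u_{i+1}`. -/
def snakeEdge (n : ℕ) : Fin (n - 1) × Fin 4 → Sym2 (Fin n ⊕ (Fin (n - 1) × Bool))
  | (i, 0) => s(Sum.inl ⟨i.val, by omega⟩, Sum.inr (i, false))
  | (i, 1) => s(Sum.inr (i, false), Sum.inr (i, true))
  | (i, 2) => s(Sum.inl ⟨i.val, by omega⟩, Sum.inl ⟨i.val + 1, by omega⟩)
  | (i, 3) => s(Sum.inr (i, true), Sum.inl ⟨i.val + 1, by omega⟩)

lemma snakeVertex_injective (n k : ℕ) : Function.Injective (snakeVertex n k) := by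
  rintro (u | ⟨i, _ | _⟩) (v | ⟨j, _ | _⟩) h <;> simp only [snakeVertex] at h <;>
    first
    | omega
    | (simp only [Sum.inl.injEq, Sum.inr.injEq, Prod.mk.injEq, and_true, Fin.ext_iff]; omega)

lemma snakeVertex_mem (n k : ℕ) (v : Fin n ⊕ (Fin (n - 1) × Bool)) :
    snakeVertex n k v ∈ Set.Icc k (k + 4 * (n - 1)) := by
  rcases v with u | ⟨i, _ | _⟩ <;> simp only [snakeVertex, Set.mem_Icc] <;> omega

lemma sqrt_eq_of_bounds {m a : ℕ} (h₁ : a * a ≤ m) (h₂ : m < (a + 1) * (a + 1)) :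
    Nat.sqrt m = a :=
  (Nat.eq_sqrt.2 ⟨h₁, h₂⟩).symm

lemma ceilSqrt_path {a : ℕ} (ha : 1 ≤ a) : ceilSqrt (a * (a + 4)) = a + 2 := by
  have h : Nat.sqrt (a * (a + 4)) = a + 1 := sqrt_eq_of_bounds (by nlinarith) (by nlinarith)
  rw [ceilSqrt, h, if_neg (by nlinarith)]

lemma snakeLabel_snakeEdge (n k : ℕ) (hk : 1 ≤ k) (i : Fin (n - 1)) (j : Fin 4) :
    snakeLabel n k (snakeEdge n (i, j)) = k + 4 * i.val + j.val := by
  fin_cases j <;> simp [snakeLabel, snakeEdge, snakeVertex]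
  · exact sqrt_eq_of_bounds (by nlinarith) (by nlinarith)
  · exact sqrt_eq_of_bounds (by nlinarith) (by nlinarith)
  · exact ceilSqrt_path (by omega)
  · exact sqrt_eq_of_bounds (by nlinarith) (by nlinarith)

lemma snakeEdge_injective (n : ℕ) : Function.Injective (snakeEdge n) := by
  rintro ⟨i, j⟩ ⟨i', j'⟩ h
  -- Already the labels for `k = 1` separate the edges.
  have h' := congrArg (snakeLabel n 1) h
  rw [snakeLabel_snakeEdge n 1 le_rfl, snakeLabel_snakeEdge n 1 le_rfl] at h'
  simp only [Prod.mk.injEq, Fin.ext_iff]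
  omega

lemma range_snakeEdge (n : ℕ) : Set.range (snakeEdge n) = (quadSnakeG n).edgeSet := by
  apply Set.Subset.antisymm
  · rintro _ ⟨⟨i, j⟩, rfl⟩
    fin_cases j <;> simp [snakeEdge, quadSnakeG]
  · have key : ∀ a b : Fin n ⊕ (Fin (n - 1) × Bool),
        (match a, b with
        | Sum.inl u, Sum.inl v => v.val = u.val + 1
        | Sum.inl u, Sum.inr (i, b) =>
          (b = false ∧ u.val = i.val) ∨ (b = true ∧ u.val = i.val + 1)
        | Sum.inr (i, b), Sum.inr (j, c) => i = j ∧ b = false ∧ c = true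
        | _, _ => False) → s(a, b) ∈ Set.range (snakeEdge n) := by
      rintro (⟨u, hu⟩ | ⟨i, b₁⟩) (⟨v, hv⟩ | ⟨j, b₂⟩) hab
      · dsimp only at hab
        subst hab
        exact ⟨(⟨u, by omega⟩, 2), rfl⟩
      · dsimp only at hab
        rcases hab with ⟨rfl, rfl⟩ | ⟨rfl, rfl⟩
        · exact ⟨(j, 0), rfl⟩
        · exact ⟨(j, 3), Sym2.eq_swap⟩
      · exact hab.elim
      · obtain ⟨rfl, rfl, rfl⟩ := hab
        exact ⟨(i, 1), rfl⟩
    intro e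
    induction e using Sym2.ind with
    | _ a b =>
      intro h
      rw [SimpleGraph.mem_edgeSet, quadSnakeG, SimpleGraph.fromRel_adj] at h
      rcases h.2 with hab | hba
      · exact key a b hab
      · rw [Sym2.eq_swap]
        exact key b a hba

lemma ncard_edgeSet_quadSnakeG (n : ℕ) : (quadSnakeG n).edgeSet.ncard = 4 * (n - 1) := by
  rw [← range_snakeEdge, ← Set.image_univ, Set.ncard_image_of_injective _ (snakeEdge_injective n),
    Set.ncard_univ]
  simp [Nat.mul_comm]

/-- For all integers `n ≥ 2` and `k ≥ 1`, the quadrilateral snake `Q n` is a `k`-geometric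
mean graph. -/
theorem statement14 (n k : ℕ) (hn : 2 ≤ n) (hk : 1 ≤ k) :
    IsKGeometricMeanGraph (quadSnakeG n) k := by
  refine ⟨snakeVertex n k, snakeVertex_injective n k, ?_, snakeLabel n k, ?_, ?_⟩
  · rw [ncard_edgeSet_quadSnakeG]
    exact snakeVertex_mem n k
  · intro u v _
    simp only [snakeLabel, Sym2.lift_mk]
    split_ifs
    · exact Or.inr rfl
    · exact Or.inl rfl
  · rw [ncard_edgeSet_quadSnakeG, ← range_snakeEdge, ← Set.range_comp]
    ext m
    simp only [Set.mem_range, Function.comp_apply, Prod.exists, snakeLabel_snakeEdge n k hk,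
      Set.mem_Icc]
    constructor
    · rintro ⟨i, j, rfl⟩
      omega
    · rintro ⟨h₁, h₂⟩
      exact ⟨⟨(m - k) / 4, by omega⟩, ⟨(m - k) % 4, by omega⟩, by dsimp only; omega⟩
end

section
/- Let r ≥ 1 and let G_1, G_2, …, G_r be finite simple graphs on pairwise disjoint vertex sets such that each of G_1, …, G_{r−1} is a cycle C_m (m ≥ 3) or a crown C_m ⊙ K_1 (m ≥ 3), and G_r is a cycle C_m (m ≥ 3), a crown C_m ⊙ K_1 (m ≥ 3), a path P_m (m ≥ 1), a comb P_m ⊙ K_1 (m ≥ 1), a triangular snake T_m (m ≥ 2), or a quadrilateral snake Q_m (m ≥ 2). Then the disjoint union G_1 ∪ G_2 ∪ … ∪ G_r is a geometric mean graph. -/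
/-- The comb `P n ⊙ K 1`: the path `P n` on the `inl` vertices, plus a pendant vertex
`inr i` joined to `inl i` for each `i`. -/
def combG (n : ℕ) : SimpleGraph (Fin n ⊕ Fin n) :=
  SimpleGraph.fromRel (fun a b =>
    match a, b with
    | Sum.inl u, Sum.inl v => v.val = u.val + 1
    | Sum.inl u, Sum.inr v => u = v
    | _, _ => False)

/-- The disjoint union of a finite family of graphs on pairwise disjoint vertex sets. -/
def sigmaUnion {ι : Type*} {V : ι → Type*} (G : ∀ i, SimpleGraph (V i)) :
    SimpleGraph (Σ i, V i) :=
  SimpleGraph.fromRel (fun a b => ∃ h : a.1 = b.1, (G b.1).Adj (h ▸ a.2) b.2)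

/-! ### Floors and ceilings of geometric means -/

/-- `Adm n a b`: a list of cases with `a < b` in which `n` is the floor or the ceiling of `√(ab)`
whenever `a ≥ 1`. The list is invariant under translating `n`, `a`, `b` simultaneously. -/
def Adm (n a b : ℕ) : Prop :=
  (b = a + 1 ∧ (n = a ∨ n = a + 1)) ∨ (b = a + 2 ∧ (n = a ∨ n = a + 1)) ∨
  ((b = a + 3 ∨ b = a + 4) ∧ n = a + 1)

lemma Adm.gm {n a b : ℕ} (ha : 1 ≤ a) (h : Adm n a b) :
    n = Nat.sqrt (a * b) ∨ n = ceilSqrt (a * b) := by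
  have key : ∀ c d : ℕ, c * c ≤ d → d < (c + 1) * (c + 1) → Nat.sqrt d = c := by
    intro c d h1 h2
    exact (Nat.eq_sqrt.2 ⟨h1, h2⟩).symm
  have ceil : ∀ d : ℕ, d ≠ 0 → Nat.sqrt (a * (a + d)) = a →
      ceilSqrt (a * (a + d)) = a + 1 := by
    intro d hd h
    unfold ceilSqrt
    rw [h, if_neg]
    intro h'
    have := Nat.eq_of_mul_eq_mul_left (by omega) h'
    omega
  have s1 : Nat.sqrt (a * (a + 1)) = a := key _ _ (by nlinarith) (by nlinarith)
  have s2 : Nat.sqrt (a * (a + 2)) = a := key _ _ (by nlinarith) (by nlinarith)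
  have s3 : Nat.sqrt (a * (a + 3)) = a + 1 := key _ _ (by nlinarith) (by nlinarith)
  have s4 : Nat.sqrt (a * (a + 4)) = a + 1 := key _ _ (by nlinarith) (by nlinarith)
  rcases h with ⟨rfl, rfl | rfl⟩ | ⟨rfl, rfl | rfl⟩ | ⟨rfl | rfl, rfl⟩
  · exact Or.inl s1.symm
  · exact Or.inr (ceil 1 (by omega) s1).symm
  · exact Or.inl s2.symm
  · exact Or.inr (ceil 2 (by omega) s2).symm
  · exact Or.inl s3.symm
  · exact Or.inl s4.symm

/-! ### Labelings starting from an arbitrary integer -/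

/-- `Lab G k q N ψ E`: the injection `ψ` labels the vertices of `G` in `{k, …, k + N - 1}`, and
the relation `E n x y`, meaning that `xy` is an edge labeled `n`, is a bijection between the edges
of `G` and `{k, …, k + q - 1}` given by floors or ceilings of geometric means. In particular `q`
is the number of edges. -/
structure Lab {V : Type*} (G : SimpleGraph V) (k q N : ℕ) (ψ : V → ℕ)
    (E : ℕ → V → V → Prop) : Prop where
  inj : Function.Injective ψ
  lb : ∀ v, k ≤ ψ v
  ub : ∀ v, ψ v < k + N
  symm : ∀ n x y, E n x y → E n y x
  elb : ∀ n x y, E n x y → k ≤ n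
  eub : ∀ n x y, E n x y → n < k + q
  adj : ∀ x y, G.Adj x y ↔ ∃ n, E n x y
  surj : ∀ n, k ≤ n → n < k + q → ∃ x y, E n x y
  edge_unique : ∀ n x y x' y', E n x y → E n x' y' → s(x, y) = s(x', y')
  label_unique : ∀ n n' x y, E n x y → E n' x y → n = n'
  gm : ∀ n x y, E n x y → n = Nat.sqrt (ψ x * ψ y) ∨ n = ceilSqrt (ψ x * ψ y)

lemma Lab.isKGeometricMeanGraph {V : Type*} {G : SimpleGraph V} {q N : ℕ} {ψ : V → ℕ}
    {E : ℕ → V → V → Prop} (h : Lab G 1 q N ψ E) (hN : N ≤ q + 1) :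
    IsKGeometricMeanGraph G 1 := by
  classical
  let L : Sym2 V → ℕ := fun e =>
    if he : ∃ n x y, e = s(x, y) ∧ E n x y then he.choose else 0
  have hL : ∀ n x y, E n x y → L s(x, y) = n := by
    intro n x y hE
    have he : ∃ n x' y', s(x, y) = s(x', y') ∧ E n x' y' := ⟨n, x, y, rfl, hE⟩
    have e1 : L s(x, y) = he.choose := dif_pos he
    obtain ⟨x', y', h1, h2⟩ := he.choose_spec
    rw [e1]
    rcases Sym2.eq_iff.1 h1 with ⟨rfl, rfl⟩ | ⟨rfl, rfl⟩
    · exact h.label_unique _ _ _ _ h2 hE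
    · exact h.label_unique _ _ _ _ (h.symm _ _ _ h2) hE
  have himg : L '' G.edgeSet = Set.Ico 1 (1 + q) := by
    ext n
    constructor
    · rintro ⟨e, he, rfl⟩
      induction e using Sym2.ind with
      | _ x y =>
        obtain ⟨n, hn⟩ := (h.adj x y).1 he
        rw [hL _ _ _ hn]
        exact ⟨h.elb _ _ _ hn, h.eub _ _ _ hn⟩
    · rintro ⟨h1, h2⟩
      obtain ⟨x, y, hE⟩ := h.surj n h1 h2
      exact ⟨s(x, y), (h.adj x y).2 ⟨n, hE⟩, hL _ _ _ hE⟩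
  have hinj : Set.InjOn L G.edgeSet := by
    intro e he e' he' heq
    induction e using Sym2.ind with
    | _ x y =>
      induction e' using Sym2.ind with
      | _ x' y' =>
        obtain ⟨n, hn⟩ := (h.adj x y).1 he
        obtain ⟨n', hn'⟩ := (h.adj x' y').1 he'
        rw [hL _ _ _ hn, hL _ _ _ hn'] at heq
        subst heq
        exact h.edge_unique _ _ _ _ _ hn hn'
  have hcard : G.edgeSet.ncard = q := by
    rw [← hinj.ncard_image, himg, Set.ncard_eq_toFinset_card']
    simp
  refine ⟨ψ, h.inj, fun v => ⟨h.lb v, ?_⟩, L, ?_, ?_⟩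
  · have := h.ub v
    omega
  · intro u v huv
    obtain ⟨n, hn⟩ := (h.adj u v).1 huv
    rw [hL _ _ _ hn]
    exact h.gm _ _ _ hn
  · rw [himg, hcard]
    ext n
    simp only [Set.mem_Ico, Set.mem_Icc]
    omega

/-- `G` has, for every `k ≥ 1`, a labeling of its `q` edges by `{k, …, k + q - 1}` with vertex
labels in `{k, …, k + N - 1}`. -/
def Shiftable {V : Type*} (G : SimpleGraph V) (q N : ℕ) : Prop :=
  ∀ k, 1 ≤ k → ∃ ψ E, Lab G k q N ψ E

lemma Shiftable.of_iso {V W : Type*} {G : SimpleGraph V} {H : SimpleGraph W} {q N : ℕ}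
    (f : G ≃g H) (h : Shiftable H q N) : Shiftable G q N := by
  intro k hk
  obtain ⟨ψ, E, hL⟩ := h k hk
  refine ⟨fun v => ψ (f v), fun n x y => E n (f x) (f y), ?_⟩
  refine ⟨hL.inj.comp f.injective, fun v => hL.lb _, fun v => hL.ub _,
    fun n x y => hL.symm _ _ _, fun n x y => hL.elb _ _ _, fun n x y => hL.eub _ _ _,
    fun x y => ?_, fun n h1 h2 => ?_, fun n x y x' y' h1 h2 => ?_,
    fun n n' x y => hL.label_unique _ _ _ _, fun n x y => hL.gm _ _ _⟩
  · rw [← hL.adj, f.map_adj_iff]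
  · obtain ⟨x, y, hE⟩ := hL.surj n h1 h2
    exact ⟨f.symm x, f.symm y, by simpa using hE⟩
  · have := hL.edge_unique _ _ _ _ _ h1 h2
    simpa [Sym2.eq_iff] using this

/-- Reduction to linear arithmetic: `p` is a pattern of vertex labels based at `0`, and
`R n a b` says that the vertices with labels `a < b` span the edge labeled `n`. -/
lemma Shiftable.of_pattern {V : Type*} {G : SimpleGraph V} {q N : ℕ} (p : V → ℕ)
    (R : ℕ → ℕ → ℕ → Prop) (hp : Function.Injective p) (hN : ∀ v, p v < N)
    (hq : ∀ n a b, R n a b → n < q) (hadm : ∀ n a b, R n a b → Adm n a b)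
    (hfun : ∀ n a b a' b', R n a b → R n a' b' → a = a' ∧ b = b')
    (hinj : ∀ n n' a b, R n a b → R n' a b → n = n')
    (hadj : ∀ x y, G.Adj x y ↔ ∃ n, R n (p x) (p y) ∨ R n (p y) (p x))
    (hsurj : ∀ n < q, ∃ x y, R n (p x) (p y)) : Shiftable G q N := by
  have hlt : ∀ n a b, R n a b → a < b := by
    intro n a b h
    have := hadm _ _ _ h
    unfold Adm at this
    omega
  intro k hk
  refine ⟨fun v => k + p v,
    fun n x y => ∃ j, n = k + j ∧ (R j (p x) (p y) ∨ R j (p y) (p x)), ?_⟩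
  refine ⟨fun x y h => hp (by simpa using h), fun v => by simp, fun v => by simpa using hN v,
    ?_, ?_, ?_, ?_, ?_, ?_, ?_, ?_⟩
  · rintro n x y ⟨j, h1, h2⟩
    exact ⟨j, h1, h2.symm⟩
  · rintro n x y ⟨j, h1, h2⟩
    omega
  · rintro n x y ⟨j, h1, h2 | h2⟩
    all_goals
      have := hq _ _ _ h2
      omega
  · intro x y
    rw [hadj]
    constructor
    · rintro ⟨n, h⟩
      exact ⟨k + n, n, rfl, h⟩
    · rintro ⟨n, j, -, h⟩
      exact ⟨j, h⟩
  · intro n h1 h2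
    obtain ⟨x, y, h⟩ := hsurj (n - k) (by omega)
    exact ⟨x, y, n - k, by omega, Or.inl h⟩
  · rintro n x y x' y' ⟨j, rfl, h⟩ ⟨j', h1, h'⟩
    obtain rfl : j = j' := by omega
    rw [Sym2.eq_iff]
    rcases h with h | h <;> rcases h' with h' | h'
    all_goals
      obtain ⟨e1, e2⟩ := hfun _ _ _ _ _ h h'
      simp [hp e1, hp e2]
  · rintro n n' x y ⟨j, rfl, h⟩ ⟨j', rfl, h'⟩
    rcases h with h | h <;> rcases h' with h' | h'
    · rw [hinj _ _ _ _ h h']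
    · have := hlt _ _ _ h
      have := hlt _ _ _ h'
      omega
    · have := hlt _ _ _ h
      have := hlt _ _ _ h'
      omega
    · rw [hinj _ _ _ _ h h']
  · have shift : ∀ j a b, R j a b → Adm (k + j) (k + a) (k + b) := by
      intro j a b h
      have := hadm _ _ _ h
      unfold Adm at this ⊢
      omega
    rintro n x y ⟨j, rfl, h | h⟩
    · exact (shift _ _ _ h).gm (by omega)
    · rw [mul_comm]
      exact (shift _ _ _ h).gm (by omega)

/-! ### Patterns for paths, combs and snakes -/

lemma shiftable_path (m : ℕ) (hm : 1 ≤ m) : Shiftable (pathG m) (m - 1) m := by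
  refine Shiftable.of_pattern (fun i => i.val)
    (fun n a b => n + 1 < m ∧ a = n ∧ b = n + 1) Fin.val_injective (fun v => v.isLt)
    (by intros; omega) (by intros; unfold Adm; omega) (by intros; omega) (by intros; omega) ?_ ?_
  · intro x y
    simp only [pathG, SimpleGraph.fromRel_adj, ne_eq, Fin.ext_iff]
    have := x.isLt
    have := y.isLt
    constructor
    · rintro ⟨-, h | h⟩
      · exact ⟨x, by omega⟩
      · exact ⟨y, by omega⟩
    · rintro ⟨n, h⟩
      omega
  · intro n hn
    exact ⟨⟨n, by omega⟩, ⟨n + 1, by omega⟩, by simp; omega⟩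

lemma shiftable_comb (m : ℕ) (hm : 1 ≤ m) : Shiftable (combG m) (2 * m - 1) (2 * m) := by
  refine Shiftable.of_pattern (Sum.elim (fun i => 2 * i.val) (fun i => 2 * i.val + 1))
    (fun n a b => n + 1 < 2 * m ∧
      ((n % 2 = 0 ∧ a = n ∧ b = n + 1) ∨ (n % 2 = 1 ∧ a + 1 = n ∧ b = n + 1)))
    ?_ ?_ (by intros; omega) (by intros; unfold Adm; omega) (by intros; omega)
    (by intros; omega) ?_ ?_
  · rintro (x | x) (y | y) h <;> simp [Fin.ext_iff] at h ⊢ <;> omega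
  · rintro (x | x) <;> simp <;> omega
  · rintro (x | x) (y | y) <;> simp only [Sum.elim_inl, Sum.elim_inr] <;>
      have := x.isLt <;> have := y.isLt
    · have e : (combG m).Adj (Sum.inl x) (Sum.inl y) ↔ y.val = x + 1 ∨ x.val = y + 1 := by
        simp [combG, Fin.ext_iff]
        omega
      rw [e]
      constructor
      · rintro (h | h)
        · exact ⟨2 * x + 1, by omega⟩
        · exact ⟨2 * y + 1, by omega⟩
      · rintro ⟨n, h⟩
        omega
    · have e : (combG m).Adj (Sum.inl x) (Sum.inr y) ↔ x.val = y := by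
        simp [combG, Fin.ext_iff]
      rw [e]
      constructor
      · intro h
        exact ⟨2 * x, by omega⟩
      · rintro ⟨n, h⟩
        omega
    · have e : (combG m).Adj (Sum.inr x) (Sum.inl y) ↔ y.val = x := by
        simp [combG, Fin.ext_iff]
      rw [e]
      constructor
      · intro h
        exact ⟨2 * x, by omega⟩
      · rintro ⟨n, h⟩
        omega
    · have e : ¬ (combG m).Adj (Sum.inr x) (Sum.inr y) := by simp [combG]
      simp only [e, false_iff]
      rintro ⟨n, h⟩
      omega
  · intro n hn
    rcases Nat.mod_two_eq_zero_or_one n with h | h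
    · exact ⟨Sum.inl ⟨n / 2, by omega⟩, Sum.inr ⟨n / 2, by omega⟩, by simp; omega⟩
    · exact ⟨Sum.inl ⟨n / 2, by omega⟩, Sum.inl ⟨n / 2 + 1, by omega⟩, by simp; omega⟩

lemma shiftable_triSnake (m : ℕ) (hm : 2 ≤ m) :
    Shiftable (triSnakeG m) (3 * (m - 1)) (3 * (m - 1) + 1) := by
  refine Shiftable.of_pattern (Sum.elim (fun i => 3 * i.val) (fun i => 3 * i.val + 1))
    (fun n a b => n < 3 * (m - 1) ∧
      ((n % 3 = 0 ∧ a = n ∧ b = n + 1) ∨ (n % 3 = 1 ∧ a + 1 = n ∧ b = n + 2) ∨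
        (n % 3 = 2 ∧ a + 1 = n ∧ b = n + 1)))
    ?_ ?_ (by intros; omega) (by intros; unfold Adm; omega) (by intros; omega)
    (by intros; omega) ?_ ?_
  · rintro (x | x) (y | y) h <;> simp [Fin.ext_iff] at h ⊢ <;> omega
  · rintro (x | x) <;> simp <;> omega
  · rintro (x | x) (y | y) <;> simp only [Sum.elim_inl, Sum.elim_inr] <;>
      have := x.isLt <;> have := y.isLt
    · have e : (triSnakeG m).Adj (Sum.inl x) (Sum.inl y) ↔ y.val = x + 1 ∨ x.val = y + 1 := by
        simp [triSnakeG, Fin.ext_iff]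
        omega
      rw [e]
      constructor
      · rintro (h | h)
        · exact ⟨3 * x + 1, by omega⟩
        · exact ⟨3 * y + 1, by omega⟩
      · rintro ⟨n, h⟩
        omega
    · have e : (triSnakeG m).Adj (Sum.inl x) (Sum.inr y) ↔ x.val = y ∨ x.val = y + 1 := by
        simp [triSnakeG]
      rw [e]
      constructor
      · rintro (h | h)
        · exact ⟨3 * y, by omega⟩
        · exact ⟨3 * y + 2, by omega⟩
      · rintro ⟨n, h⟩
        omega
    · have e : (triSnakeG m).Adj (Sum.inr x) (Sum.inl y) ↔ y.val = x ∨ y.val = x + 1 := by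
        simp [triSnakeG]
      rw [e]
      constructor
      · rintro (h | h)
        · exact ⟨3 * x, by omega⟩
        · exact ⟨3 * x + 2, by omega⟩
      · rintro ⟨n, h⟩
        omega
    · have e : ¬ (triSnakeG m).Adj (Sum.inr x) (Sum.inr y) := by simp [triSnakeG]
      simp only [e, false_iff]
      rintro ⟨n, h⟩
      omega
  · intro n hn
    obtain h | h | h : n % 3 = 0 ∨ n % 3 = 1 ∨ n % 3 = 2 := by omega
    · exact ⟨Sum.inl ⟨n / 3, by omega⟩, Sum.inr ⟨n / 3, by omega⟩, by simp; omega⟩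
    · exact ⟨Sum.inl ⟨n / 3, by omega⟩, Sum.inl ⟨n / 3 + 1, by omega⟩, by simp; omega⟩
    · exact ⟨Sum.inr ⟨n / 3, by omega⟩, Sum.inl ⟨n / 3 + 1, by omega⟩, by simp; omega⟩

/-- The edges of the quadrilateral snake, with `4i` on the path and `4i + 1`, `4i + 3` on the
added vertices; the edges of each quadrilateral, in the order of their labels, are
`u_i v_i`, `u_i u_{i+1}`, `v_i w_i`, `w_i u_{i+1}`. -/
def QuadRel (m n a b : ℕ) : Prop :=
  n < 4 * (m - 1) ∧
    ((n % 4 = 0 ∧ a = n ∧ b = n + 1) ∨ (n % 4 = 1 ∧ a + 1 = n ∧ b = n + 3) ∨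
      (n % 4 = 2 ∧ a + 1 = n ∧ b = n + 1) ∨ (n % 4 = 3 ∧ a = n ∧ b = n + 1))

/-- The pairs of labels spanning an edge, without reference to the label of the edge. -/
lemma exists_quadRel {m a b : ℕ} : (∃ n, QuadRel m n a b) ↔
    a < 4 * (m - 1) ∧ ((a % 4 = 0 ∧ b = a + 1) ∨ (a % 4 = 0 ∧ b = a + 4) ∨
      (a % 4 = 1 ∧ b = a + 2) ∨ (a % 4 = 3 ∧ b = a + 1)) := by
  unfold QuadRel
  constructor
  · rintro ⟨n, h⟩
    omega
  · rintro ⟨ha, h | h | h | h⟩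
    · exact ⟨a, by omega⟩
    · exact ⟨a + 1, by omega⟩
    · exact ⟨a + 1, by omega⟩
    · exact ⟨a, by omega⟩

lemma shiftable_quadSnake (m : ℕ) (hm : 2 ≤ m) :
    Shiftable (quadSnakeG m) (4 * (m - 1)) (4 * (m - 1) + 1) := by
  refine Shiftable.of_pattern (Sum.elim (fun i => 4 * i.val)
      (fun w => 4 * w.1.val + (if w.2 then 3 else 1))) (QuadRel m)
    ?_ ?_ (fun n a b h => h.1)
    (by intro n a b h; unfold QuadRel at h; unfold Adm; omega)
    (by intro n a b a' b' h h'; unfold QuadRel at h h'; omega)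
    (by intro n n' a b h h'; unfold QuadRel at h h'; omega) ?_ ?_
  · rintro (x | ⟨x, _ | _⟩) (y | ⟨y, _ | _⟩) h <;> simp [Fin.ext_iff] at h ⊢ <;> omega
  · rintro (x | ⟨x, _ | _⟩) <;> simp <;> omega
  · have e1 : ∀ x y, (quadSnakeG m).Adj (Sum.inl x) (Sum.inl y) ↔
        y.val = x + 1 ∨ x.val = y + 1 := by
      intro x y
      simp [quadSnakeG, Fin.ext_iff]
      omega
    have e2 : ∀ x y b, (quadSnakeG m).Adj (Sum.inl x) (Sum.inr (y, b)) ↔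
        (b = false ∧ x.val = y) ∨ (b = true ∧ x.val = y + 1) := by
      intro x y b
      simp [quadSnakeG]
    have e3 : ∀ x y b, (quadSnakeG m).Adj (Sum.inr (y, b)) (Sum.inl x) ↔
        (b = false ∧ x.val = y) ∨ (b = true ∧ x.val = y + 1) := by
      intro x y b
      rw [SimpleGraph.adj_comm, e2]
    have e4 : ∀ x y b c, (quadSnakeG m).Adj (Sum.inr (x, b)) (Sum.inr (y, c)) ↔
        x.val = y ∧ b ≠ c := by
      intro x y b c
      cases b <;> cases c <;> simp [quadSnakeG, Fin.ext_iff]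
      omega
    rintro (x | ⟨x, _ | _⟩) (y | ⟨y, _ | _⟩) <;>
      simp only [exists_or, exists_quadRel, e1, e2, e3, e4, Sum.elim_inl, Sum.elim_inr, if_true,
        Bool.false_eq_true, if_false, Bool.true_eq_false, true_and, false_and, and_true,
        and_false, or_false, false_or, ne_eq, not_true_eq_false, not_false_eq_true,
        false_iff] <;>
      have := x.isLt <;> have := y.isLt <;> omega
  · intro n hn
    unfold QuadRel
    obtain h | h | h | h : n % 4 = 0 ∨ n % 4 = 1 ∨ n % 4 = 2 ∨ n % 4 = 3 := by omega
    · exact ⟨Sum.inl ⟨n / 4, by omega⟩, Sum.inr (⟨n / 4, by omega⟩, false), by simp; omega⟩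
    · exact ⟨Sum.inl ⟨n / 4, by omega⟩, Sum.inl ⟨n / 4 + 1, by omega⟩, by simp; omega⟩
    · exact ⟨Sum.inr (⟨n / 4, by omega⟩, false), Sum.inr (⟨n / 4, by omega⟩, true),
        by simp; omega⟩
    · exact ⟨Sum.inr (⟨n / 4, by omega⟩, true), Sum.inl ⟨n / 4 + 1, by omega⟩, by simp; omega⟩

/-! ### Patterns for cycles and crowns -/

/-- The zigzag `0, 2, 4, …, 5, 3, 1` on `m` points: the even numbers increasing, then the odd
numbers decreasing. -/
def zig (m i : ℕ) : ℕ := if 2 * i < m then 2 * i else 2 * m - 2 * i - 1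

lemma zig_lt {m i : ℕ} (h : i < m) : zig m i < m := by
  unfold zig
  split_ifs <;> omega

lemma zig_inj {m i j : ℕ} (hi : i < m) (hj : j < m) (h : zig m i = zig m j) : i = j := by
  unfold zig at h
  split_ifs at h <;> omega

lemma zig_surj {m a : ℕ} (ha : a < m) : ∃ i : Fin m, zig m i = a := by
  rcases Nat.mod_two_eq_zero_or_one a with h | h
  · refine ⟨⟨a / 2, by omega⟩, ?_⟩
    unfold zig
    simp only
    split_ifs <;> omega
  · refine ⟨⟨m - (a + 1) / 2, by omega⟩, ?_⟩
    unfold zig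
    simp only
    split_ifs <;> omega

/-- The pairs `a < b` of zigzag values taken at cyclically consecutive indices. -/
def ZigAdj (m a b : ℕ) : Prop :=
  (a = 0 ∧ b = 1) ∨ b = a + 2 ∨ (a + 2 = m ∧ b + 1 = m)

lemma cycle_adj_iff {m : ℕ} (hm : 3 ≤ m) (x y : Fin m) :
    (cycleG m).Adj x y ↔ ZigAdj m (zig m x) (zig m y) ∨ ZigAdj m (zig m y) (zig m x) := by
  have := x.isLt
  have := y.isLt
  simp only [cycleG, SimpleGraph.fromRel_adj, ne_eq, Fin.ext_iff]
  unfold ZigAdj zig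
  split_ifs <;> omega

/-- An edge from `a` to `a + 2` is labeled `a + 1`; the edge `0, 1` takes the remaining label `0`
and the edge `m - 2, m - 1` takes the remaining label `m - 1`. -/
lemma shiftable_cycle (m : ℕ) (hm : 3 ≤ m) : Shiftable (cycleG m) m m := by
  refine Shiftable.of_pattern (fun i => zig m i)
    (fun n a b => (n = 0 ∧ a = 0 ∧ b = 1) ∨ (n + 1 < m ∧ a + 1 = n ∧ b = n + 1) ∨
      (n + 1 = m ∧ a + 2 = m ∧ b + 1 = m))
    (fun x y h => Fin.ext (zig_inj x.isLt y.isLt h)) (fun v => zig_lt v.isLt)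
    (by intros; omega) (by intros; unfold Adm; omega) (by intros; omega) (by intros; omega) ?_ ?_
  · intro x y
    rw [cycle_adj_iff hm]
    have := zig_lt x.isLt
    have := zig_lt y.isLt
    generalize zig m x = a at *
    generalize zig m y = b at *
    unfold ZigAdj
    constructor
    · rintro ((h | h | h) | (h | h | h))
      · exact ⟨0, by omega⟩
      · exact ⟨a + 1, by omega⟩
      · exact ⟨m - 1, by omega⟩
      · exact ⟨0, by omega⟩
      · exact ⟨b + 1, by omega⟩
      · exact ⟨m - 1, by omega⟩
    · rintro ⟨n, h⟩
      omega
  · intro n hn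
    obtain ⟨a, b, ha, hb, h⟩ : ∃ a b, a < m ∧ b < m ∧ ((n = 0 ∧ a = 0 ∧ b = 1) ∨
        (n + 1 < m ∧ a + 1 = n ∧ b = n + 1) ∨ (n + 1 = m ∧ a + 2 = m ∧ b + 1 = m)) := by
      obtain h | h | h : n = 0 ∨ (1 ≤ n ∧ n + 1 < m) ∨ n + 1 = m := by omega
      · exact ⟨0, 1, by omega⟩
      · exact ⟨n - 1, n + 1, by omega⟩
      · exact ⟨m - 2, m - 1, by omega⟩
    obtain ⟨x, rfl⟩ := zig_surj ha
    obtain ⟨y, rfl⟩ := zig_surj hb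
    exact ⟨x, y, h⟩

/-- The edges of the crown, with `2z + 1` on the cycle and `2z` on the pendant vertices: the
pendant edges get odd labels except the first one, and the cycle edges get even labels except
the one joining `1` to `3`. -/
def CrownRel (m n a b : ℕ) : Prop :=
  (n = 0 ∧ a = 0 ∧ b = 1) ∨ (n = 1 ∧ a = 1 ∧ b = 3) ∨
  (n % 2 = 0 ∧ n + 4 ≤ 2 * m ∧ a + 1 = n ∧ b = n + 3) ∨
  (n % 2 = 1 ∧ 3 ≤ n ∧ n < 2 * m ∧ a + 1 = n ∧ b = n) ∨
  (n + 2 = 2 * m ∧ a + 3 = 2 * m ∧ b + 1 = 2 * m)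

/-- The pairs of labels spanning an edge, without reference to the label of the edge. -/
lemma exists_crownRel {m a b : ℕ} (hm : 3 ≤ m) (ha : a < 2 * m) (hb : b < 2 * m) :
    (∃ n, CrownRel m n a b) ↔ (a % 2 = 0 ∧ b = a + 1) ∨ (a = 1 ∧ b = 3) ∨
      (a % 2 = 1 ∧ b = a + 4) ∨ (a + 3 = 2 * m ∧ b + 1 = 2 * m) := by
  unfold CrownRel
  constructor
  · rintro ⟨n, h | h | h | h | h⟩ <;> omega
  · rintro (h | h | h | h)
    · by_cases h0 : a = 0
      · exact ⟨0, Or.inl (by omega)⟩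
      · exact ⟨a + 1, by omega⟩
    · exact ⟨1, by omega⟩
    · exact ⟨a + 1, by omega⟩
    · exact ⟨2 * m - 2, by omega⟩

lemma shiftable_crown (m : ℕ) (hm : 3 ≤ m) : Shiftable (crownG m) (2 * m) (2 * m) := by
  refine Shiftable.of_pattern
    (Sum.elim (fun i => 2 * zig m i.val + 1) (fun i => 2 * zig m i.val)) (CrownRel m)
    ?_ ?_ (by intro n a b h; unfold CrownRel at h; omega)
    (by intro n a b h; unfold CrownRel at h; unfold Adm; omega)
    (by intro n a b a' b' h h'; unfold CrownRel at h h'; omega)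
    (by intro n n' a b h h'; unfold CrownRel at h h'; omega) ?_ ?_
  · rintro (x | x) (y | y) h <;> simp only [Sum.elim_inl, Sum.elim_inr] at h
    · rw [Fin.ext (zig_inj x.isLt y.isLt (by omega))]
    · omega
    · omega
    · rw [Fin.ext (zig_inj x.isLt y.isLt (by omega))]
  · rintro (x | x) <;> have := zig_lt x.isLt <;> simp <;> omega
  · have e1 : ∀ x y, (crownG m).Adj (Sum.inl x) (Sum.inl y) ↔ (cycleG m).Adj x y := by
      simp [crownG, cycleG]
    have e2 : ∀ x y, (crownG m).Adj (Sum.inl x) (Sum.inr y) ↔ zig m x = zig m y := by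
      intro x y
      have : zig m x = zig m y ↔ x = y :=
        ⟨fun h => Fin.ext (zig_inj x.isLt y.isLt h), fun h => by rw [h]⟩
      rw [this]
      simp [crownG]
    have e3 : ∀ x y, (crownG m).Adj (Sum.inr x) (Sum.inl y) ↔ zig m y = zig m x := by
      intro x y
      rw [SimpleGraph.adj_comm, e2]
    have e4 : ∀ x y, ¬ (crownG m).Adj (Sum.inr x) (Sum.inr y) := by simp [crownG]
    rintro (x | x) (y | y) <;>
      have hx := zig_lt x.isLt <;> have hy := zig_lt y.isLt <;>
      simp only [e1, e2, e3, e4, cycle_adj_iff hm, Sum.elim_inl, Sum.elim_inr] <;>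
      generalize zig m x = a at * <;> generalize zig m y = b at * <;>
      rw [exists_or, exists_crownRel hm (by omega) (by omega),
        exists_crownRel hm (by omega) (by omega)]
    · have key : ∀ c d : ℕ, ZigAdj m c d ↔
          ((2 * c + 1) % 2 = 0 ∧ 2 * d + 1 = 2 * c + 1 + 1) ∨ (2 * c + 1 = 1 ∧ 2 * d + 1 = 3) ∨
          ((2 * c + 1) % 2 = 1 ∧ 2 * d + 1 = 2 * c + 1 + 4) ∨
          (2 * c + 1 + 3 = 2 * m ∧ 2 * d + 1 + 1 = 2 * m) := by
        intro c d
        unfold ZigAdj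
        constructor
        · rintro (h | h | h) <;> omega
        · rintro (h | h | h | h) <;> omega
      rw [← key, ← key]
    · constructor
      · intro h
        exact Or.inr (Or.inl (by omega))
      · rintro ((h | h | h | h) | (h | h | h | h)) <;> omega
    · constructor
      · intro h
        exact Or.inl (Or.inl (by omega))
      · rintro ((h | h | h | h) | (h | h | h | h)) <;> omega
    · constructor
      · exact False.elim
      · rintro ((h | h | h | h) | (h | h | h | h)) <;> omega
  · intro n hn
    have vert : ∀ c < 2 * m, ∃ v : Fin m ⊕ Fin m,
        Sum.elim (fun i : Fin m => 2 * zig m i.val + 1) (fun i => 2 * zig m i.val) v = c := by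
      intro c hc
      obtain ⟨i, hi⟩ := zig_surj (m := m) (a := c / 2) (by omega)
      rcases Nat.mod_two_eq_zero_or_one c with h | h
      · exact ⟨Sum.inr i, by simp only [Sum.elim_inr]; omega⟩
      · exact ⟨Sum.inl i, by simp only [Sum.elim_inl]; omega⟩
    obtain ⟨a, b, ha, hb, h⟩ : ∃ a b, a < 2 * m ∧ b < 2 * m ∧ CrownRel m n a b := by
      unfold CrownRel
      obtain h | h | h | h | h : n = 0 ∨ n = 1 ∨ (n % 2 = 0 ∧ 2 ≤ n ∧ n + 4 ≤ 2 * m) ∨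
        (n % 2 = 1 ∧ 3 ≤ n) ∨ n + 2 = 2 * m := by omega
      · exact ⟨0, 1, by omega⟩
      · exact ⟨1, 3, by omega⟩
      · exact ⟨n - 1, n + 3, by omega⟩
      · exact ⟨n - 1, n, by omega⟩
      · exact ⟨2 * m - 3, 2 * m - 1, by omega⟩
    obtain ⟨x, hx⟩ := vert a ha
    obtain ⟨y, hy⟩ := vert b hb
    exact ⟨x, y, by rw [hx, hy]; exact h⟩

/-! ### Disjoint unions -/

lemma sigmaUnion_adj_iff {ι : Type*} {V : ι → Type*} (G : ∀ i, SimpleGraph (V i))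
    (a b : Σ i, V i) :
    (sigmaUnion G).Adj a b ↔ ∃ i x y, a = ⟨i, x⟩ ∧ b = ⟨i, y⟩ ∧ (G i).Adj x y := by
  obtain ⟨i, x⟩ := a
  obtain ⟨j, y⟩ := b
  simp only [sigmaUnion, SimpleGraph.fromRel_adj]
  constructor
  · rintro ⟨-, ⟨h, h'⟩ | ⟨h, h'⟩⟩
    · obtain rfl : i = j := h
      exact ⟨_, _, _, rfl, rfl, h'⟩
    · obtain rfl : j = i := h
      exact ⟨_, _, _, rfl, rfl, h'.symm⟩
  · rintro ⟨i', x', y', h1, h2, h3⟩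
    obtain ⟨rfl, h1⟩ := Sigma.mk.inj h1
    obtain ⟨rfl, h2⟩ := Sigma.mk.inj h2
    obtain rfl := eq_of_heq h1
    obtain rfl := eq_of_heq h2
    refine ⟨?_, Or.inl ⟨rfl, h3⟩⟩
    intro h
    exact h3.ne (eq_of_heq (Sigma.mk.inj h).2)

/-- Stacking: the component `i` is labeled from `K i`, and the blocks `[K i, K (i + 1))` of edge
labels partition `[1, K r)`. -/
lemma lab_sigmaUnion {r : ℕ} {V : Fin r → Type*} (G : ∀ i, SimpleGraph (V i))
    (K : ℕ → ℕ) (hK : Monotone K) (hK0 : K 0 = 1) (N : Fin r → ℕ)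
    (hN : ∀ i : Fin r, (i : ℕ) + 1 < r → K i + N i ≤ K (i + 1))
    (hN' : ∀ i : Fin r, K i + N i ≤ K (i + 1) + 1)
    (ψ : ∀ i, V i → ℕ) (E : ∀ i, ℕ → V i → V i → Prop)
    (h : ∀ i : Fin r, Lab (G i) (K i) (K (i + 1) - K i) (N i) (ψ i) (E i)) :
    Lab (sigmaUnion G) 1 (K r - 1) (K r) (fun a => ψ a.1 a.2)
      (fun n a b => ∃ i x y, a = ⟨i, x⟩ ∧ b = ⟨i, y⟩ ∧ E i n x y) := by
  have hstep : ∀ i, K i ≤ K (i + 1) := fun i => hK (Nat.le_succ i)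
  have hone : ∀ i, 1 ≤ K i := fun i => hK0 ▸ hK (Nat.zero_le i)
  have htop : ∀ i : Fin r, K (i + 1) ≤ K r := fun i => hK i.isLt
  have sep : ∀ (i j : Fin r) (x : V i) (y : V j), i < j → ψ i x < ψ j y := by
    intro i j x y hij
    have hij' : (i : ℕ) + 1 ≤ j := hij
    have h1 := (h i).ub x
    have h2 := (h j).lb y
    have h3 := hN i (lt_of_le_of_lt hij' j.isLt)
    have h4 := hK hij'
    omega
  have esep : ∀ (i j : Fin r) n x y x' y', E i n x y → E j n x' y' → ¬ i < j := by
    intro i j n x y x' y' h1 h2 hij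
    have hij' : (i : ℕ) + 1 ≤ j := hij
    have h3 := (h i).eub _ _ _ h1
    have h4 := (h j).elb _ _ _ h2
    have h5 := hK hij'
    have h6 := hstep i
    omega
  refine ⟨?_, ?_, ?_, ?_, ?_, ?_, ?_, ?_, ?_, ?_, ?_⟩
  · rintro ⟨i, x⟩ ⟨j, y⟩ hxy
    dsimp only at hxy
    rcases lt_trichotomy i j with hij | rfl | hij
    · have := sep i j x y hij
      omega
    · rw [(h i).inj hxy]
    · have := sep j i y x hij
      omega
  · rintro ⟨i, x⟩
    exact (hone i).trans ((h i).lb x)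
  · rintro ⟨i, x⟩
    have h1 := (h i).ub x
    have h2 := hN' i
    have h3 := htop i
    dsimp only
    omega
  · rintro n a b ⟨i, x, y, ha, hb, hE⟩
    exact ⟨i, y, x, hb, ha, (h i).symm _ _ _ hE⟩
  · rintro n a b ⟨i, x, y, -, -, hE⟩
    exact (hone i).trans ((h i).elb _ _ _ hE)
  · rintro n a b ⟨i, x, y, -, -, hE⟩
    have h1 := (h i).eub _ _ _ hE
    have h2 := htop i
    have h3 := hstep i
    omega
  · intro a b
    rw [sigmaUnion_adj_iff]
    constructor
    · rintro ⟨i, x, y, ha, hb, hadj⟩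
      obtain ⟨n, hn⟩ := ((h i).adj x y).1 hadj
      exact ⟨n, i, x, y, ha, hb, hn⟩
    · rintro ⟨n, i, x, y, ha, hb, hn⟩
      exact ⟨i, x, y, ha, hb, ((h i).adj x y).2 ⟨n, hn⟩⟩
  · intro n h1 h2
    have find : ∀ s : ℕ, n < K s → ∃ i < s, K i ≤ n ∧ n < K (i + 1) := by
      intro s
      induction s with
      | zero =>
        intro hn
        omega
      | succ s ih =>
        intro hn
        by_cases hs : n < K s
        · obtain ⟨i, hi, h'⟩ := ih hs
          exact ⟨i, by omega, h'⟩
        · exact ⟨s, by omega, by omega, hn⟩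
    obtain ⟨i, hi, h3, h4⟩ := find r (by have := hone r; omega)
    obtain ⟨x, y, hE⟩ := (h ⟨i, hi⟩).surj n h3 (by dsimp only; omega)
    exact ⟨_, _, ⟨i, hi⟩, x, y, rfl, rfl, hE⟩
  · rintro n a b a' b' ⟨i, x, y, rfl, rfl, hE⟩ ⟨j, x', y', rfl, rfl, hE'⟩
    obtain rfl : i = j :=
      le_antisymm (not_lt.1 (esep _ _ _ _ _ _ _ hE' hE)) (not_lt.1 (esep _ _ _ _ _ _ _ hE hE'))
    exact congrArg (Sym2.map (Sigma.mk i)) ((h i).edge_unique _ _ _ _ _ hE hE')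
  · rintro n n' a b ⟨i, x, y, rfl, rfl, hE⟩ ⟨j, x', y', h1, h2, hE'⟩
    obtain ⟨rfl, h1⟩ := Sigma.mk.inj h1
    obtain ⟨_, h2⟩ := Sigma.mk.inj h2
    obtain rfl := eq_of_heq h1
    obtain rfl := eq_of_heq h2
    exact (h i).label_unique _ _ _ _ hE hE'
  · rintro n a b ⟨i, x, y, rfl, rfl, hE⟩
    exact (h i).gm _ _ _ hE

/-- Let `G_1, …, G_r` (`r ≥ 1`) be finite simple graphs on pairwise disjoint vertex sets such
that each of `G_1, …, G_{r-1}` is a cycle `C m` (`m ≥ 3`) or a crown `C m ⊙ K 1` (`m ≥ 3`),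
and `G_r` is a cycle (`m ≥ 3`), a crown (`m ≥ 3`), a path `P m` (`m ≥ 1`), a comb
`P m ⊙ K 1` (`m ≥ 1`), a triangular snake `T m` (`m ≥ 2`) or a quadrilateral snake `Q m`
(`m ≥ 2`). Then the disjoint union `G_1 ∪ ⋯ ∪ G_r` is a geometric mean graph. -/
theorem statement15 (r : ℕ) (hr : 1 ≤ r) (V : Fin r → Type*) [∀ i, Fintype (V i)]
    (G : ∀ i, SimpleGraph (V i))
    (hinit : ∀ i : Fin r, (i : ℕ) < r - 1 →
      (∃ m, 3 ≤ m ∧ Nonempty (G i ≃g cycleG m)) ∨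
      (∃ m, 3 ≤ m ∧ Nonempty (G i ≃g crownG m)))
    (hlast : (∃ m, 3 ≤ m ∧ Nonempty (G ⟨r - 1, by omega⟩ ≃g cycleG m)) ∨
      (∃ m, 3 ≤ m ∧ Nonempty (G ⟨r - 1, by omega⟩ ≃g crownG m)) ∨
      (∃ m, 1 ≤ m ∧ Nonempty (G ⟨r - 1, by omega⟩ ≃g pathG m)) ∨
      (∃ m, 1 ≤ m ∧ Nonempty (G ⟨r - 1, by omega⟩ ≃g combG m)) ∨
      (∃ m, 2 ≤ m ∧ Nonempty (G ⟨r - 1, by omega⟩ ≃g triSnakeG m)) ∨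
      (∃ m, 2 ≤ m ∧ Nonempty (G ⟨r - 1, by omega⟩ ≃g quadSnakeG m))) :
    IsKGeometricMeanGraph (sigmaUnion G) 1 := by
  have hcomp : ∀ i : Fin r, ∃ q N, ((i : ℕ) + 1 < r → N ≤ q) ∧ N ≤ q + 1 ∧
      Shiftable (G i) q N := by
    intro i
    by_cases hi : (i : ℕ) + 1 < r
    · rcases hinit i (by omega) with ⟨m, hm, ⟨f⟩⟩ | ⟨m, hm, ⟨f⟩⟩
      · exact ⟨_, _, fun _ => le_rfl, by omega, (shiftable_cycle m hm).of_iso f⟩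
      · exact ⟨_, _, fun _ => le_rfl, by omega, (shiftable_crown m hm).of_iso f⟩
    · have hir : i = ⟨r - 1, by omega⟩ := Fin.ext (by have := i.isLt; dsimp only; omega)
      rw [← hir] at hlast
      rcases hlast with ⟨m, hm, ⟨f⟩⟩ | ⟨m, hm, ⟨f⟩⟩ | ⟨m, hm, ⟨f⟩⟩ | ⟨m, hm, ⟨f⟩⟩ |
        ⟨m, hm, ⟨f⟩⟩ | ⟨m, hm, ⟨f⟩⟩
      · exact ⟨_, _, fun h => absurd h hi, by omega, (shiftable_cycle m hm).of_iso f⟩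
      · exact ⟨_, _, fun h => absurd h hi, by omega, (shiftable_crown m hm).of_iso f⟩
      · exact ⟨_, _, fun h => absurd h hi, by omega, (shiftable_path m hm).of_iso f⟩
      · exact ⟨_, _, fun h => absurd h hi, by omega, (shiftable_comb m hm).of_iso f⟩
      · exact ⟨_, _, fun h => absurd h hi, by omega, (shiftable_triSnake m hm).of_iso f⟩
      · exact ⟨_, _, fun h => absurd h hi, by omega, (shiftable_quadSnake m hm).of_iso f⟩
  choose q N hN hN' hS using hcomp
  let K : ℕ → ℕ := fun s => 1 + ∑ j ∈ Finset.range s, if h : j < r then q ⟨j, h⟩ else 0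
  have hKsucc : ∀ i : Fin r, K (i + 1) = K i + q i := by
    intro i
    simp only [K, Finset.sum_range_succ, i.isLt, dif_pos, Fin.eta]
    omega
  have hK : Monotone K := by
    refine monotone_nat_of_le_succ fun s => ?_
    simp only [K, Finset.sum_range_succ]
    omega
  have hK0 : K 0 = 1 := by simp [K]
  have hK1 : ∀ s, 1 ≤ K s := fun s => hK0 ▸ hK (Nat.zero_le s)
  choose ψ E hL using fun i : Fin r => hS i (K i) (hK1 i)
  refine (lab_sigmaUnion G K hK hK0 N ?_ ?_ ψ E ?_).isKGeometricMeanGraph ?_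
  · intro i hi
    have := hN i hi
    have := hKsucc i
    omega
  · intro i
    have := hN' i
    have := hKsucc i
    omega
  · intro i
    rw [hKsucc i, Nat.add_sub_cancel_left]
    exact hL i
  · omega
end
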